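/- arXiv:2510.16825 — 5 statements merged into one kernel-verified Lean document; each statement's English description precedes it below -/
import Mathlib

section
/- Let F be an arbitrary field, m ≥ 1, and let f ∈ F⟨X_1,…,X_m⟩ be a nonzero multilinear polynomial. Then f is (m−1)-rich. -/
/-- `f` is `m'`-rich: for every `n ≥ m'` and all `β₁, …, β_{n-m'} ∈ F` there exist
`A₁, …, A_m ∈ Mₙ(F)` such that `f(A₁,…,A_m)` is diagonal with `(i,i)` entry `βᵢ`
for `1 ≤ i ≤ n - m'`. -/
def IsRich (F : Type) [Field F] (m : ℕ) (f : FreeAlgebra F (Fin m)) (m' : ℕ) : Prop :=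
  ∀ n : ℕ, m' ≤ n → ∀ β : Fin (n - m') → F,
    ∃ A : Fin m → Matrix (Fin n) (Fin n) F,
      (FreeAlgebra.lift F A f : Matrix (Fin n) (Fin n) F).IsDiag ∧
      ∀ i : Fin (n - m'),
        (FreeAlgebra.lift F A f : Matrix (Fin n) (Fin n) F)
          (Fin.castLE (Nat.sub_le n m') i) (Fin.castLE (Nat.sub_le n m') i) = β i

/-- `f` is multilinear: `f = Σ_{σ ∈ Sym(m)} α_σ X_{σ(1)} ⋯ X_{σ(m)}`. -/
def IsMultilinearPoly (F : Type) [Field F] (m : ℕ) (f : FreeAlgebra F (Fin m)) : Prop :=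
  ∃ α : Equiv.Perm (Fin m) → F,
    f = ∑ σ : Equiv.Perm (Fin m),
      α σ • (List.ofFn fun t : Fin m => FreeAlgebra.ι F (σ t)).prod

namespace RichAux

/-- Greedy construction of a sequence. -/
lemma greedy {F : Type*} [Zero F] (Q : ℕ → (ℕ → F) → Prop)
    (hloc : ∀ j y y', (∀ q, q ≤ j → y q = y' q) → Q j y → Q j y')
    (hex : ∀ j y, ∃ x, Q j (Function.update y j x)) : ∃ y, ∀ j, Q j y := by
  classical
  choose g hg using hex
  let Y : ℕ → ℕ → F := fun j => Nat.rec (fun _ => 0) (fun j y => Function.update y j (g j y)) j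
  have hY : ∀ j, Y (j+1) = Function.update (Y j) j (g j (Y j)) := fun j => rfl
  have hst : ∀ q d, Y (q+1+d) q = Y (q+1) q := by
    intro q d
    induction d with
    | zero => rfl
    | succ d ih =>
      rw [← add_assoc, hY, Function.update_of_ne (by omega), ih]
  refine ⟨fun q => Y (q+1) q, fun j => ?_⟩
  refine hloc j (Y (j+1)) _ ?_ (by rw [hY]; exact hg j (Y j))
  intro q hq
  obtain ⟨d, rfl⟩ := Nat.exists_eq_add_of_le hq
  have := hst q d
  rw [show q + d + 1 = q + 1 + d by omega]
  exact this

/-- Value of a descending path labelled by a word, ending at height `j`. -/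
def val {F L : Type*} [Field F] (v : ℕ → L → F) (j : ℕ) : List L → F
  | [] => 1
  | a :: w => v (j + w.length) a * val v j w

lemma val_congr {F L : Type*} [Field F] (v v' : ℕ → L → F) (j : ℕ) (w : List L)
    (h : ∀ q, q < j + w.length → ∀ t ∈ w, v q t = v' q t) : val v j w = val v' j w := by
  induction w with
  | nil => rfl
  | cons a w ih =>
    simp only [val]
    rw [ih (fun q hq t ht => h q (by simp; omega) t (by simp [ht])), h _ (by simp) a (by simp)]

lemma win {F L ι : Type*} [Field F] (α : ι → F) : ∀ (k : ℕ) (I : Finset ι)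
    (w : ι → List L), I.Nonempty → (∀ i ∈ I, α i ≠ 0) → Set.InjOn w I →
    (∀ i ∈ I, (w i).Nodup ∧ (w i).length = k) →
    ∃ v : ℕ → L → F, ∀ j, ∑ i ∈ I, α i * val v j (w i) ≠ 0 := by
  classical
  intro k
  induction k with
  | zero =>
    intro I w ⟨i, hi⟩ hα hw hk
    have hnil : ∀ i ∈ I, w i = [] := fun i hi => List.length_eq_zero_iff.1 (hk i hi).2
    have : I = {i} := by
      ext j
      simp only [Finset.mem_singleton]
      refine ⟨fun hj => hw hj hi (by rw [hnil j hj, hnil i hi]), fun h => h ▸ hi⟩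
    subst this
    refine ⟨fun _ _ => 0, fun j => ?_⟩
    simp [hnil i hi, val, hα i hi]
  | succ k ih =>
    intro I w ⟨i₀, hi₀⟩ hα hw hk
    obtain ⟨a, w₀, hw₀⟩ : ∃ a w₀, w i₀ = a :: w₀ :=
      List.exists_cons_of_length_eq_add_one (hk i₀ hi₀).2
    set I' := I.filter (fun i => (w i).head? = some a) with hI'
    have hcons : ∀ i ∈ I', w i = a :: (w i).tail := by
      intro i hi
      have := (Finset.mem_filter.1 hi).2
      cases hwi : w i with
      | nil => simp [hwi] at this
      | cons b r => simp [hwi] at this; simp [this]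
    obtain ⟨u, hu⟩ := ih I' (fun i => (w i).tail) ⟨i₀, by simp [hI', hi₀, hw₀]⟩
      (fun i hi => hα i (Finset.mem_filter.1 hi).1)
      (by
        intro i hi j hj hij
        apply hw (Finset.mem_filter.1 hi).1 (Finset.mem_filter.1 hj).1
        rw [hcons i hi, hcons j hj]; exact congrArg _ hij)
      (by
        intro i hi
        have := hk i (Finset.mem_filter.1 hi).1
        refine ⟨this.1.tail, by simp [this.2]⟩)
    let vv : (ℕ → F) → ℕ → L → F := fun y j t => if t = a then y j else u j t
    obtain ⟨y, hy⟩ := greedy (fun j y => k ≤ j →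
        ∑ i ∈ I, α i * val (vv y) (j - k) (w i) ≠ 0)
      (by
        intro j y y' hyy hQ hkj
        convert hQ hkj using 1
        refine Finset.sum_congr rfl fun i hi => ?_
        congr 1
        apply val_congr
        intro q hq t _
        rw [(hk i hi).2] at hq
        simp only [vv]
        rw [hyy q (by omega)])
      (by
        intro j y
        by_cases hkj : k ≤ j
        swap
        · exact ⟨0, fun h => absurd h hkj⟩
        obtain ⟨p, rfl⟩ := Nat.exists_eq_add_of_le' hkj
        have key : ∀ x, ∑ i ∈ I, α i * val (vv (Function.update y (p+k) x)) p (w i) =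
            x * (∑ i ∈ I', α i * val u p (w i).tail) +
            ∑ i ∈ I.filter (fun i => ¬ (w i).head? = some a), α i * val (vv y) p (w i) := by
          intro x
          rw [← Finset.sum_filter_add_sum_filter_not I (fun i => (w i).head? = some a)]
          congr 1
          · rw [Finset.mul_sum]
            refine Finset.sum_congr rfl fun i hi => ?_
            have hki := hk i (Finset.mem_filter.1 hi).1
            have hc := hcons i hi
            generalize (w i).tail = r at hc
            rw [hc] at hki ⊢
            obtain ⟨h1, h2⟩ := hki
            simp only [List.length_cons, Nat.add_right_cancel_iff] at h2
            simp only [val, h2]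
            rw [val_congr _ u p r]
            · simp [vv]; ring
            · intro q hq t ht
              have : t ≠ a := fun h => (List.nodup_cons.1 h1).1 (h ▸ ht)
              simp [vv, this]
          · refine Finset.sum_congr rfl fun i hi => ?_
            have hki := hk i (Finset.mem_filter.1 hi).1
            have hh := (Finset.mem_filter.1 hi).2
            obtain ⟨b, r, hc⟩ : ∃ b r, w i = b :: r :=
              List.exists_cons_of_length_eq_add_one hki.2
            rw [hc] at hki hh ⊢
            obtain ⟨h1, h2⟩ := hki
            simp only [List.length_cons, Nat.add_right_cancel_iff] at h2
            have hb : b ≠ a := by simpa using hh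
            simp only [val, h2]
            rw [val_congr _ (vv y) p r]
            · simp [vv, hb]
            · intro q hq t ht
              have : q ≠ p + k := by omega
              simp [vv, this]
        simp only [Nat.add_sub_cancel, key]
        by_cases hR : ∑ i ∈ I.filter (fun i => ¬ (w i).head? = some a),
            α i * val (vv y) p (w i) = 0
        · exact ⟨1, fun _ => by rw [hR, one_mul, add_zero]; exact hu p⟩
        · exact ⟨0, fun _ => by rw [zero_mul, zero_add]; exact hR⟩)
    refine ⟨vv y, fun j => ?_⟩
    simpa using hy (j+k) (by omega)

/-- The matrices. -/
def mat {F L : Type*} [Field F] [DecidableEq L] (n k : ℕ) (b : L) (v : ℕ → L → F) (x : ℕ → F)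
    (t : L) : Matrix (Fin n) (Fin n) F := fun p q =>
  if t = b then (if (q : ℕ) = p + k then x p else 0)
  else (if (p : ℕ) = q + 1 then v q t else 0)

lemma mat_word {F L : Type*} [Field F] [DecidableEq L] (n k : ℕ) (b : L) (v : ℕ → L → F)
    (x : ℕ → F) (w : List L) (hb : b ∉ w) (p q : Fin n) :
    (w.map (mat n k b v x)).prod p q = if (p : ℕ) = q + w.length then val v q w else 0 := by
  induction w generalizing p with
  | nil => simp [val, Matrix.one_apply, Fin.ext_iff]
  | cons a w ih =>
    simp only [List.mem_cons, not_or] at hb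
    rw [List.map_cons, List.prod_cons, Matrix.mul_apply]
    simp only [ih hb.2, List.length_cons, val, mat, if_neg (Ne.symm hb.1)]
    split_ifs with h
    · rw [Finset.sum_eq_single (⟨q + w.length, by omega⟩ : Fin n)]
      · simp [h, add_assoc]
      · intro r _ hr
        rw [Ne, Fin.ext_iff] at hr
        simp only [] at hr
        rw [if_neg hr, mul_zero] 
      · simp
    · refine Finset.sum_eq_zero fun r _ => ?_
      by_cases h1 : (p : ℕ) = r + 1
      · rw [if_neg (show ¬ (r : ℕ) = q + w.length by omega), mul_zero]
      · rw [if_neg h1, zero_mul]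

/-- a word beginning with `b` -/
lemma mat_b {F L : Type*} [Field F] [DecidableEq L] (n k : ℕ) (b : L) (v : ℕ → L → F)
    (x : ℕ → F) (z : List L) (hb : b ∉ z) (p q : Fin n) :
    ((b :: z).map (mat n k b v x)).prod p q =
      if (p : ℕ) + k < n ∧ (p : ℕ) + k = q + z.length then x p * val v q z else 0 := by
  rw [List.map_cons, List.prod_cons, Matrix.mul_apply]
  simp only [mat_word n k b v x z hb]
  simp only [mat, if_true]
  split_ifs with h
  · rw [Finset.sum_eq_single (⟨p + k, h.1⟩ : Fin n)]
    · simp [h.2]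
    · intro r _ hr
      rw [Ne, Fin.ext_iff] at hr
      simp only [] at hr
      rw [if_neg hr, zero_mul]
    · simp
  · refine Finset.sum_eq_zero fun r _ => ?_
    by_cases h1 : (r : ℕ) = p + k
    · rw [if_neg (show ¬ (r : ℕ) = q + z.length by omega), mul_zero]
    · rw [if_neg h1, zero_mul]

lemma mat_gen {F L : Type*} [Field F] [DecidableEq L] (n k : ℕ) (b : L) (v : ℕ → L → F)
    (x : ℕ → F) (u z : List L) (hu : b ∉ u) (hz : b ∉ z) (hk : u.length + z.length = k)
    (p q : Fin n) :
    ((u ++ b :: z).map (mat n k b v x)).prod p q =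
      if p = q ∧ u.length ≤ (p : ℕ) ∧ (p : ℕ) - u.length + k < n then
        val v (p - u.length) u * (x (p - u.length) * val v q z) else 0 := by
  rw [List.map_append, List.prod_append, Matrix.mul_apply]
  simp only [mat_b n k b v x z hz, mat_word n k b v x u hu]
  split_ifs with h
  · obtain ⟨rfl, h1, h2⟩ := h
    rw [Finset.sum_eq_single (⟨p - u.length, by omega⟩ : Fin n)]
    · rw [if_pos (by simp; omega), if_pos (by simp; omega)]
    · intro r _ hr
      rw [Ne, Fin.ext_iff] at hr
      simp only [] at hr
      rw [if_neg (by omega), zero_mul]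
    · simp
  · refine Finset.sum_eq_zero fun r _ => ?_
    by_cases h1 : (p : ℕ) = r + u.length
    · rw [if_neg (show ¬ ((r : ℕ) + k < n ∧ (r : ℕ) + k = q + z.length) from ?_), mul_zero]
      rintro ⟨h2, h3⟩
      exact h ⟨Fin.ext (by omega), by omega, by omega⟩
    · rw [if_neg h1, zero_mul]

lemma split_word {L : Type*} (b : L) (w : List L) (hw : w.Nodup) (hb : b ∈ w) :
    ∃ u z, w = u ++ b :: z ∧ b ∉ u ∧ b ∉ z := by
  obtain ⟨u, z, rfl⟩ := List.append_of_mem hb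
  have := List.nodup_middle.1 hw
  simp only [List.nodup_cons, List.mem_append, not_or] at this
  exact ⟨u, z, rfl, this.1.1, this.1.2⟩

lemma main {F L ι : Type*} [Field F] [DecidableEq L] (α : ι → F) (k : ℕ) (I : Finset ι)
    (w : ι → List L) (hI : I.Nonempty) (hα : ∀ i ∈ I, α i ≠ 0) (hw : Set.InjOn w I)
    (hk : ∀ i ∈ I, (w i).Nodup ∧ (w i).length = k + 1) (hall : ∀ i ∈ I, ∀ b : L, b ∈ w i)
    (n : ℕ) (β : Fin (n - k) → F) :
    ∃ A : L → Matrix (Fin n) (Fin n) F,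
      (∑ i ∈ I, α i • ((w i).map A).prod).IsDiag ∧
      ∀ i : Fin (n - k), (∑ i ∈ I, α i • ((w i).map A).prod)
          (Fin.castLE (Nat.sub_le n k) i) (Fin.castLE (Nat.sub_le n k) i) = β i := by
  classical
  obtain ⟨i₀, hi₀⟩ := hI
  obtain ⟨b, w₀, hw₀⟩ : ∃ a w₀, w i₀ = a :: w₀ :=
    List.exists_cons_of_length_eq_add_one (hk i₀ hi₀).2
  set I' := I.filter (fun i => (w i).head? = some b) with hI'
  have hcons : ∀ i ∈ I', w i = b :: (w i).tail := by
    intro i hi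
    have := (Finset.mem_filter.1 hi).2
    cases hwi : w i with
    | nil => simp [hwi] at this
    | cons b r => simp [hwi] at this; simp [this]
  obtain ⟨v, hv⟩ := win α k I' (fun i => (w i).tail) ⟨i₀, by simp [hI', hi₀, hw₀]⟩
    (fun i hi => hα i (Finset.mem_filter.1 hi).1)
    (by
      intro i hi j hj hij
      apply hw (Finset.mem_filter.1 hi).1 (Finset.mem_filter.1 hj).1
      rw [hcons i hi, hcons j hj]; exact congrArg _ hij)
    (by
      intro i hi
      have := hk i (Finset.mem_filter.1 hi).1
      refine ⟨this.1.tail, by simp [this.2]⟩)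
  have happ : ∀ (A : L → Matrix (Fin n) (Fin n) F) p q,
      (∑ i ∈ I, α i • ((w i).map A).prod) p q = ∑ i ∈ I, α i * ((w i).map A).prod p q := by
    intro A p q
    simp [Matrix.sum_apply]
  have hsp : ∀ i ∈ I, ∃ u z, w i = u ++ b :: z ∧ b ∉ u ∧ b ∉ z ∧ u.length + z.length = k := by
    intro i hi
    obtain ⟨u, z, h, h1, h2⟩ := split_word b (w i) (hk i hi).1 (hall i hi b)
    refine ⟨u, z, h, h1, h2, ?_⟩
    have := (hk i hi).2
    rw [h] at this
    simp at this
    omega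
  obtain ⟨x, hx⟩ := greedy (fun p x => ∀ h : p < n - k,
      ∑ i ∈ I, α i * ((w i).map (mat n k b v x)).prod ⟨p, by omega⟩ ⟨p, by omega⟩ = β ⟨p, h⟩)
    (by
      intro p x x' hxx hQ h
      rw [← hQ h]
      refine Finset.sum_congr rfl fun i hi => ?_
      obtain ⟨u, z, hwi, h1, h2, h3⟩ := hsp i hi
      rw [hwi, mat_gen n k b v _ u z h1 h2 h3, mat_gen n k b v _ u z h1 h2 h3]
      simp only []
      rw [hxx (p - u.length) (by omega)])
    (by
      intro p x
      by_cases h : p < n - k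
      swap
      · exact ⟨0, fun h' => absurd h' h⟩
      have key : ∀ c, ∑ i ∈ I, α i * ((w i).map (mat n k b v
          (Function.update x p c))).prod ⟨p, by omega⟩ ⟨p, by omega⟩ =
          c * (∑ i ∈ I', α i * val v p (w i).tail) +
          ∑ i ∈ I.filter (fun i => ¬ (w i).head? = some b),
            α i * ((w i).map (mat n k b v x)).prod ⟨p, by omega⟩ ⟨p, by omega⟩ := by
        intro c
        rw [← Finset.sum_filter_add_sum_filter_not I (fun i => (w i).head? = some b)]
        congr 1
        · rw [Finset.mul_sum]
          refine Finset.sum_congr rfl fun i hi => ?_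
          have hki := hk i (Finset.mem_filter.1 hi).1
          have hc := hcons i hi
          generalize (w i).tail = r at hc
          rw [hc] at hki ⊢
          obtain ⟨h1, h2⟩ := hki
          simp only [List.length_cons, Nat.add_right_cancel_iff] at h2
          rw [mat_b n k b v _ r (List.nodup_cons.1 h1).1, if_pos ⟨by simp; omega, by simp [h2]⟩]
          simp
          ring
        · refine Finset.sum_congr rfl fun i hi => ?_
          have hh := (Finset.mem_filter.1 hi).2
          obtain ⟨u, z, hwi, h1, h2, h3⟩ := hsp i (Finset.mem_filter.1 hi).1
          rw [hwi] at hh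
          have hu : u.length ≠ 0 := by
            intro h0
            rw [List.length_eq_zero_iff.1 h0] at hh
            simp at hh
          rw [hwi, mat_gen n k b v _ u z h1 h2 h3, mat_gen n k b v _ u z h1 h2 h3]
          congr 1
          split_ifs with hc
          · simp only [] at hc ⊢
            rw [Function.update_of_ne (by omega)]
          · rfl
      refine ⟨(β ⟨p, h⟩ - ∑ i ∈ I.filter (fun i => ¬ (w i).head? = some b),
            α i * ((w i).map (mat n k b v x)).prod ⟨p, by omega⟩ ⟨p, by omega⟩) /
            (∑ i ∈ I', α i * val v p (w i).tail), fun _ => ?_⟩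
      rw [key, div_mul_cancel₀ _ (hv p), sub_add_cancel])
  refine ⟨mat n k b v x, ?_, ?_⟩
  · intro p q hpq
    rw [happ]
    refine Finset.sum_eq_zero fun i hi => ?_
    obtain ⟨u, z, hwi, h1, h2, h3⟩ := hsp i hi
    rw [hwi, mat_gen n k b v _ u z h1 h2 h3, if_neg (fun h => hpq h.1), mul_zero]
  · intro i
    rw [happ]
    exact hx i i.2

end RichAux

theorem multilinear_is_rich (F : Type) [Field F] (m : ℕ) (hm : 1 ≤ m)
    (f : FreeAlgebra F (Fin m)) (hf0 : f ≠ 0) (hf : IsMultilinearPoly F m f) :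
    IsRich F m f (m - 1) := by
  classical
  obtain ⟨α, rfl⟩ := hf
  obtain ⟨k, rfl⟩ : ∃ k, m = k + 1 := ⟨m - 1, by omega⟩
  intro n hn β
  have hval : ∀ A : Fin (k+1) → Matrix (Fin n) (Fin n) F,
      FreeAlgebra.lift F A (∑ σ : Equiv.Perm (Fin (k+1)),
        α σ • (List.ofFn fun t : Fin (k+1) => FreeAlgebra.ι F (σ t)).prod) =
      ∑ σ ∈ Finset.univ.filter (fun σ => α σ ≠ 0),
        α σ • ((List.ofFn fun t => σ t).map A).prod := by
    intro A
    rw [map_sum, Finset.sum_filter]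
    refine Finset.sum_congr rfl fun σ _ => ?_
    split_ifs with h
    · rw [map_smul, map_list_prod, List.map_ofFn, List.map_ofFn]
      congr 3
      funext t
      simp
    · rw [not_not.1 h, zero_smul, map_zero]
  obtain ⟨A, h1, h2⟩ := RichAux.main α k (Finset.univ.filter (fun σ => α σ ≠ 0))
    (fun σ => List.ofFn fun t => σ t)
    (by
      by_contra hne
      rw [Finset.not_nonempty_iff_eq_empty, Finset.filter_eq_empty_iff] at hne
      apply hf0
      refine Finset.sum_eq_zero fun σ hσ => ?_
      rw [not_not.1 (hne hσ), zero_smul])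
    (fun σ hσ => (Finset.mem_filter.1 hσ).2)
    (by
      intro σ _ τ _ h
      have := List.ofFn_injective h
      exact Equiv.ext fun t => congrFun this t)
    (fun σ _ => ⟨List.nodup_ofFn.2 σ.injective, by simp⟩)
    (fun σ _ b => by
      rw [List.mem_ofFn]
      exact ⟨σ.symm b, by simp⟩)
    n β
  refine ⟨A, ?_, ?_⟩
  · rw [hval]; exact h1
  · intro i
    rw [hval]; exact h2 i
end

section
/- Let F be an algebraically closed field, f ∈ F⟨X_1,…,X_m⟩, and k ≥ 1 such that f is noncentral on M_k(F). Let n ≥ k, let Y_1,…,Y_m be generic n×n matrices over F, and let α_1,…,α_n be the roots (with multiplicity) of the characteristic polynomial of f(Y_1,…,Y_m) in an algebraic closure Ω of K = Frac(R). Then the subfield F(α_1,…,α_n) of Ω has transcendence degree at least n − k over F. -/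
open Polynomial in
theorem coeff_det_of_natDegree_le {R G : Type} [CommRing R] [Fintype G] [DecidableEq G]
    (M : Matrix G G R[X]) (d : ℕ) (h : ∀ i j, (M i j).natDegree ≤ d) :
    M.det.coeff (Fintype.card G * d) = (Matrix.of fun i j => (M i j).coeff d).det := by
  rw [Matrix.det_apply, Matrix.det_apply, Polynomial.finsetSum_coeff]
  refine Finset.sum_congr rfl fun g _ => ?_
  rw [Polynomial.coeff_smul]
  congr 1
  exact Polynomial.coeff_prod_of_natDegree_le (s := Finset.univ) (fun i => M (g i) i) d (fun i _ => h _ _)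

theorem map_lift_freeAlgebra {F A B : Type} {X : Type} [CommRing F] [Ring A] [Ring B] [Algebra F A] [Algebra F B]
    (g : A →ₐ[F] B) (a : X → A) (f : FreeAlgebra F X) :
    g (FreeAlgebra.lift F a f) = FreeAlgebra.lift F (fun i => g (a i)) f := by
  have : g.comp (FreeAlgebra.lift F a) = FreeAlgebra.lift F (fun i => g (a i)) := by
    ext i; simp
  exact DFunLike.congr_fun this f

open Polynomial in
/-- twisted homogeneous matrices -/
def twSub (F R G : Type) [Field F] [CommRing R] [Algebra F R] [CommRing G] [Fintype G]
    [DecidableEq G] (σ : R →ₐ[F] R) : Subalgebra F (Matrix G G R[X]) where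
  carrier := {M | (∀ i j e, (M i j).coeff e ≠ 0 → j = i + (e : G)) ∧
    ∀ i j, M (i + 1) (j + 1) = (M i j).map (σ : R →+* R)}
  mul_mem' := by
    rintro M N ⟨hM, hM'⟩ ⟨hN, hN'⟩
    constructor
    · intro i j e he
      rw [Matrix.mul_apply, Polynomial.finsetSum_coeff] at he
      obtain ⟨k, -, hk⟩ := Finset.exists_ne_zero_of_sum_ne_zero he
      rw [Polynomial.coeff_mul] at hk
      obtain ⟨⟨a, b⟩, hab, h⟩ := Finset.exists_ne_zero_of_sum_ne_zero hk
      have h1 := hM _ _ _ (left_ne_zero_of_mul h)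
      have h2 := hN _ _ _ (right_ne_zero_of_mul h)
      rw [Finset.HasAntidiagonal.mem_antidiagonal] at hab
      simp only at hab h1 h2
      rw [h2, h1, ← hab]; push_cast; ring
    · intro i j
      rw [Matrix.mul_apply, Matrix.mul_apply, Polynomial.map_sum,
        ← Equiv.sum_comp (Equiv.addRight (1 : G))]
      refine Finset.sum_congr rfl fun k _ => ?_
      simp [hM', hN']
  add_mem' := by
    rintro M N ⟨hM, hM'⟩ ⟨hN, hN'⟩
    constructor
    · intro i j e he
      by_cases h : (M i j).coeff e = 0
      · apply hN; intro h'; apply he; simp [h, h']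
      · exact hM _ _ _ h
    · intro i j
      simp [hM', hN']
  algebraMap_mem' := by
    intro c
    constructor
    · intro i j e he
      rw [Matrix.algebraMap_matrix_apply] at he
      split_ifs at he with h
      · rw [Polynomial.algebraMap_apply, Polynomial.coeff_C] at he
        split_ifs at he with h'
        · simp [h, h']
        · simp at he
      · simp at he
    · intro i j
      rw [Matrix.algebraMap_matrix_apply, Matrix.algebraMap_matrix_apply]
      by_cases h : i = j <;> simp [h, Polynomial.algebraMap_apply]

open Polynomial in
theorem twSub_det_ne_zero {F R G : Type} [Field F] [CommRing R] [IsDomain R] [Algebra F R] [CommRing G] [Fintype G]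
    [DecidableEq G] (σ : R →ₐ[F] R) (hσ : Function.Injective σ) (hG : ∀ g : G, ∃ e : ℕ, (e : G) = g)
    (M : Matrix G G R[X]) (hM : M ∈ twSub F R G σ) (h0 : M ≠ 0) : M.det ≠ 0 := by
  classical
  obtain ⟨hM1, hM2⟩ := hM
  have hne : (Finset.univ.filter fun p : G × G => M p.1 p.2 ≠ 0).Nonempty := by
    by_contra h
    apply h0
    ext1 i j
    by_contra hh
    exact h ⟨(i, j), by simpa using hh⟩
  obtain ⟨⟨i0, j0⟩, hp, hmax⟩ := Finset.exists_max_image _ (fun p : G × G => (M p.1 p.2).natDegree) hne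
  simp only [Finset.mem_filter, Finset.mem_univ, true_and, Prod.forall] at hp hmax
  set d := (M i0 j0).natDegree with hd
  have hle : ∀ i j, (M i j).natDegree ≤ d := by
    intro i j
    by_cases h : M i j = 0
    · simp [h]
    · exact hmax i j h
  have hc0 : (M i0 j0).coeff d ≠ 0 := by
    rw [hd]; simpa using hp
  have hj0 := hM1 _ _ _ hc0
  have hc : ∀ e : ℕ, (M (i0 + e) (i0 + e + d)).coeff d ≠ 0 := by
    intro e
    induction e with
    | zero => simpa [← hj0] using hc0
    | succ e ih =>
      have : M (i0 + (e + 1 : ℕ)) (i0 + (e + 1 : ℕ) + d) = (M (i0 + e) (i0 + e + d)).map (σ : R →+* R) := by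
        rw [← hM2]; congr 1 <;> push_cast <;> ring
      rw [this, Polynomial.coeff_map]
      intro h
      exact ih (hσ (by simpa using h))
  have hc' : ∀ i : G, (M i (i + d)).coeff d ≠ 0 := by
    intro i
    obtain ⟨e, he⟩ := hG (i - i0)
    have := hc e
    rw [he] at this
    simpa using this
  intro hdet
  have key := coeff_det_of_natDegree_le M d hle
  rw [hdet, Polynomial.coeff_zero] at key
  have h2 := Matrix.det_permute' (Equiv.addRight (d : G)) (Matrix.of fun i j => (M i j).coeff d)
  rw [← key, mul_zero] at h2
  have h3 : (Matrix.of fun i j => (M i j).coeff d).submatrix id (Equiv.addRight (d : G))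
      = Matrix.diagonal fun i => (M i (i + d)).coeff d := by
    ext i j
    by_cases h : i = j
    · subst h; simp
    · rw [Matrix.diagonal_apply_ne _ h]
      by_contra hh
      have := hM1 _ _ _ hh
      simp at this
      exact h this.symm
  rw [h3, Matrix.det_diagonal, Finset.prod_eq_zero_iff] at h2
  obtain ⟨i, -, hi⟩ := h2
  exact hc' i hi

/-- generic matrix -/
noncomputable def genMat (F : Type) [Field F] (m : ℕ) (G : Type) (l : Fin m) :
    Matrix G G (MvPolynomial (Fin m × G × G) F) :=
  Matrix.of fun i j : G => MvPolynomial.X (l, i, j)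

open Polynomial in
theorem generic_det_ne_zero {F G : Type} [Field F] [CommRing G] [Fintype G]
    [DecidableEq G] (m : ℕ) (ε : G → ℕ) (hε : ∀ g : G, (ε g : G) = g) (f : FreeAlgebra F (Fin m))
    (h0 : FreeAlgebra.lift F (genMat F m G) f ≠ 0) :
    (FreeAlgebra.lift F (genMat F m G) f).det ≠ 0 := by
  let R := MvPolynomial (Fin m × G × G) F
  let s : Fin m × G × G → Fin m × G × G := fun p => (p.1, p.2.1 + 1, p.2.2 + 1)
  have hs : Function.Injective s := by
    rintro ⟨a, b, c⟩ ⟨a', b', c'⟩ h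
    simpa [s] using h
  let σ : R →ₐ[F] R := MvPolynomial.rename s
  let ψ : R →ₐ[F] R[X] := MvPolynomial.aeval fun p => C (MvPolynomial.X p) * X ^ ε (p.2.2 - p.2.1)
  let ev : R[X] →ₐ[F] R := (Polynomial.aeval (1 : R)).restrictScalars F
  have hψX : ∀ p, ψ (MvPolynomial.X p) = C (MvPolynomial.X p) * X ^ ε (p.2.2 - p.2.1) :=
    fun p => MvPolynomial.aeval_X _ _
  have hσX : ∀ p, σ (MvPolynomial.X p) = MvPolynomial.X (s p) := fun p => MvPolynomial.rename_X _ _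
  have hev : ∀ r, ev (ψ r) = r := by
    intro r
    have : ev.comp ψ = AlgHom.id F R := by
      apply MvPolynomial.algHom_ext
      intro p
      simp only [AlgHom.comp_apply, hψX]
      simp [ev]
      rfl
    exact DFunLike.congr_fun this r
  have hmem : ψ.mapMatrix (FreeAlgebra.lift F (genMat F m G) f) ∈ twSub F R G σ := by
    rw [map_lift_freeAlgebra]
    have hA : ∀ l, ψ.mapMatrix (genMat F m G l) ∈ twSub F R G σ := by
      intro l
      constructor
      · intro i j e he
        simp only [AlgHom.mapMatrix_apply, Matrix.map_apply, genMat, Matrix.of_apply, hψX,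
          Polynomial.coeff_C_mul, Polynomial.coeff_X_pow] at he
        split_ifs at he with h
        · rw [h, hε]; ring
        · simp at he
      · intro i j
        simp only [AlgHom.mapMatrix_apply, Matrix.map_apply, genMat, Matrix.of_apply, hψX,
          Polynomial.map_mul, Polynomial.map_C, Polynomial.map_pow, Polynomial.map_X, RingHom.coe_coe, hσX]
        simp [s]
    have : FreeAlgebra.lift F (fun l => ψ.mapMatrix (genMat F m G l)) f =
      (twSub F R G σ).val (FreeAlgebra.lift F (fun l => (⟨_, hA l⟩ : twSub F R G σ)) f) := by
      rw [map_lift_freeAlgebra]; rfl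
    rw [this]
    exact Subtype.property _
  have hne : ψ.mapMatrix (FreeAlgebra.lift F (genMat F m G) f) ≠ 0 := by
    intro h
    apply h0
    ext1 i j
    have := congrFun (congrFun h i) j
    rw [← hev (FreeAlgebra.lift F (genMat F m G) f i j)]
    simp only [AlgHom.mapMatrix_apply, Matrix.map_apply] at this
    rw [this]; simp
  have := twSub_det_ne_zero σ (MvPolynomial.rename_injective s hs) (fun g => ⟨ε g, hε g⟩) _ hmem hne
  intro h
  apply this
  rw [← AlgHom.map_det, h, map_zero]

theorem generic_det_ne_zero' {F : Type} [Field F] (m n : ℕ) (f : FreeAlgebra F (Fin m))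
    (h0 : FreeAlgebra.lift F (genMat F m (Fin (n+1))) f ≠ 0) :
    (FreeAlgebra.lift F (genMat F m (Fin (n+1))) f).det ≠ 0 := 
  generic_det_ne_zero (G := ZMod (n+1)) m ZMod.val (fun g => ZMod.natCast_zmod_val g) f h0

theorem exists_algHom_aux {R B K : Type} [CommRing R] [IsDomain R] [CommRing B] [IsDomain B]
    [Algebra R B] [Algebra.IsIntegral R B] (hinj : Function.Injective (algebraMap R B))
    [Field K] [IsAlgClosed K] (g : R →+* K) (hg : Function.Injective g) :
    ∃ h : B →+* K, h.comp (algebraMap R B) = g := by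
  let _ : Algebra R K := g.toAlgebra
  have : FaithfulSMul R B := (faithfulSMul_iff_algebraMap_injective _ _).2 hinj
  have : FaithfulSMul R K := (faithfulSMul_iff_algebraMap_injective _ _).2 hg
  let L : B →ₐ[R] K := IsAlgClosed.lift
  exact ⟨L.toRingHom, RingHom.ext fun x => L.commutes x⟩

theorem exists_ringHom_extend {R B K : Type} [CommRing R] [CommRing B] [Algebra R B]
    [Algebra.IsIntegral R B] (hinj : Function.Injective (algebraMap R B)) [Field K] [IsAlgClosed K]
    (g : R →+* K) : ∃ h : B →+* K, h.comp (algebraMap R B) = g := by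
  have : (RingHom.ker g).IsPrime := RingHom.ker_isPrime g
  obtain ⟨Q, -, hQ, hQ2⟩ := Ideal.exists_ideal_over_prime_of_isIntegral (RingHom.ker g) (⊥ : Ideal B)
    (by
      intro x hx
      have : algebraMap R B x = 0 := by simpa using hx
      have : x = 0 := hinj (by simpa using this)
      simp [this])
  have hle : RingHom.ker g ≤ Q.comap (algebraMap R B) := hQ2.ge
  let q : (R ⧸ RingHom.ker g) →+* B ⧸ Q := Ideal.quotientMap Q (algebraMap R B) hle
  have hq : Function.Injective q := Ideal.quotientMap_injective' hQ2.le
  let _ : Algebra (R ⧸ RingHom.ker g) (B ⧸ Q) := q.toAlgebra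
  have : IsScalarTower R (R ⧸ RingHom.ker g) (B ⧸ Q) := IsScalarTower.of_algebraMap_eq (fun x => rfl)
  have : Algebra.IsIntegral R (B ⧸ Q) := inferInstance
  have : Algebra.IsIntegral (R ⧸ RingHom.ker g) (B ⧸ Q) := Algebra.IsIntegral.tower_top R
  obtain ⟨L, hL⟩ := exists_algHom_aux (R := R ⧸ RingHom.ker g) (B := B ⧸ Q) hq
    (RingHom.kerLift g) (RingHom.kerLift_injective g)
  refine ⟨L.comp (Ideal.Quotient.mk Q), ?_⟩
  ext x
  exact DFunLike.congr_fun hL (Ideal.Quotient.mk _ x)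

theorem indep_step {F B K ι : Type} [Field F] [CommRing B] [IsDomain B] [Algebra F B] [Field K] [Algebra F K]
    (φ : B →ₐ[F] K) (a : ι → B) (ha : AlgebraicIndependent F (fun i => φ (a i))) (c : F) (e : B)
    (hne : e ≠ algebraMap F B c) (he : φ e = algebraMap F K c) :
    AlgebraicIndependent F (fun o : Option ι => o.elim e a) := by
  have ha' : AlgebraicIndependent F a := AlgebraicIndependent.of_comp φ ha
  rw [ha'.option_iff_transcendental]
  intro halg
  have h1 : IsAlgebraic (Algebra.adjoin F (Set.range a)) (e - algebraMap F B c) := by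
    refine halg.sub ?_
    rw [IsScalarTower.algebraMap_apply F (Algebra.adjoin F (Set.range a)) B]
    exact isAlgebraic_algebraMap _
  obtain ⟨q, hq0, hq⟩ := h1.exists_nonzero_coeff_and_aeval_eq_zero
    (mem_nonZeroDivisors_of_ne_zero (sub_ne_zero.2 hne))
  apply hq0
  have h2 : φ (q.coeff 0 : B) = 0 := by
    have h3 := congrArg φ hq
    rw [← Polynomial.divX_mul_X_add q] at h3
    simpa [he] using h3
  obtain ⟨p, hp⟩ : ∃ p : MvPolynomial ι F, MvPolynomial.aeval a p = (q.coeff 0 : B) := by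
    have := (Algebra.adjoin_range_eq_range_aeval F a).le (q.coeff 0).2
    exact this
  rw [← hp, MvPolynomial.comp_aeval_apply] at h2
  have := ha.eq_zero_of_aeval_eq_zero p h2
  rw [this, map_zero] at hp
  exact Subtype.ext hp.symm

theorem lift_zero_eq {F A X : Type} [CommRing F] [Ring A] [Algebra F A] (f : FreeAlgebra F X) :
    FreeAlgebra.lift F (fun _ : X => (0 : A)) f =
      algebraMap F A (FreeAlgebra.lift F (fun _ : X => (0 : F)) f) := by
  have := map_lift_freeAlgebra (Algebra.ofId F A) (fun _ : X => (0 : F)) f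
  simp only [map_zero] at this
  rw [← this]; rfl

/-- block diagonal hom -/
def blockHom (F R : Type) [CommRing F] [CommRing R] [Algebra F R] (n : ℕ) :
    (Matrix (Fin n) (Fin n) R × Matrix (Fin 1) (Fin 1) R) →ₐ[F]
      Matrix (Fin n ⊕ Fin 1) (Fin n ⊕ Fin 1) R where
  toFun p := Matrix.fromBlocks p.1 0 0 p.2
  map_one' := by simp
  map_mul' p q := by simp [Matrix.fromBlocks_multiply]
  map_zero' := by simp
  map_add' p q := by simp [Matrix.fromBlocks_add]
  commutes' c := by
    simp only [Algebra.algebraMap_eq_smul_one]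
    simp only [Prod.smul_fst, Prod.smul_snd, Prod.fst_one, Prod.snd_one]
    rw [← Matrix.fromBlocks_one, Matrix.fromBlocks_smul]; simp

/-- specialization of generic matrices -/
noncomputable def spec (F : Type) [Field F] (m n : ℕ) :
    MvPolynomial (Fin m × Fin (n+1) × Fin (n+1)) F →ₐ[F] MvPolynomial (Fin m × Fin n × Fin n) F :=
  MvPolynomial.aeval fun p =>
    Matrix.reindex finSumFinEquiv finSumFinEquiv
      (Matrix.fromBlocks (genMat F m (Fin n) p.1) 0 0 (0 : Matrix (Fin 1) (Fin 1) _)) p.2.1 p.2.2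

theorem spec_lift (F : Type) [Field F] (m n : ℕ) (f : FreeAlgebra F (Fin m)) :
    (spec F m n).mapMatrix (FreeAlgebra.lift F (genMat F m (Fin (n+1))) f) =
    Matrix.reindex finSumFinEquiv finSumFinEquiv
      (Matrix.fromBlocks (FreeAlgebra.lift F (genMat F m (Fin n)) f) 0 0
        (algebraMap F (Matrix (Fin 1) (Fin 1) _) (FreeAlgebra.lift F (fun _ => (0 : F)) f))) := by
  rw [map_lift_freeAlgebra]
  let R := MvPolynomial (Fin m × Fin n × Fin n) F
  have h1 := map_lift_freeAlgebra
    (((Matrix.reindexAlgEquiv F R (finSumFinEquiv (m := n) (n := 1))).toAlgHom).comp (blockHom F R n))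
    (fun l => (genMat F m (Fin n) l, 0)) f
  have h2 : FreeAlgebra.lift F (fun l => (genMat F m (Fin n) l, (0 : Matrix (Fin 1) (Fin 1) R))) f
      = (FreeAlgebra.lift F (genMat F m (Fin n)) f,
        (algebraMap F (Matrix (Fin 1) (Fin 1) _) (FreeAlgebra.lift F (fun _ => (0 : F)) f))) := by
    refine Prod.ext ?_ ?_
    · exact map_lift_freeAlgebra (AlgHom.fst F (Matrix (Fin n) (Fin n) R) (Matrix (Fin 1) (Fin 1) R))
        (fun l => (genMat F m (Fin n) l, (0 : Matrix (Fin 1) (Fin 1) R))) f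
    · exact (map_lift_freeAlgebra (AlgHom.snd F (Matrix (Fin n) (Fin n) R) (Matrix (Fin 1) (Fin 1) R))
        (fun l => (genMat F m (Fin n) l, (0 : Matrix (Fin 1) (Fin 1) R))) f).trans
        (lift_zero_eq f)
  rw [h2] at h1
  refine Eq.trans ?_ h1.symm
  congr 2
  funext l
  ext i j
  simp [spec, blockHom, genMat]

theorem spec_charpoly (F : Type) [Field F] (m n : ℕ) (f : FreeAlgebra F (Fin m)) :
    (FreeAlgebra.lift F (genMat F m (Fin (n+1))) f).charpoly.map (spec F m n : _ →+* _) =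
    (FreeAlgebra.lift F (genMat F m (Fin n)) f).charpoly *
      (Polynomial.X - Polynomial.C (algebraMap F _ (FreeAlgebra.lift F (fun _ => (0 : F)) f))) := by
  rw [← Matrix.charpoly_map]
  have := spec_lift F m n f
  rw [AlgHom.mapMatrix_apply] at this
  erw [this]
  rw [Matrix.charpoly_reindex, Matrix.charpoly_fromBlocks_zero₁₂]
  congr 1
  simp [Matrix.charpoly, Matrix.charmatrix_apply, Matrix.algebraMap_matrix_apply]

theorem nonscalar (F : Type) [Field F] (m k n : ℕ) (hkn : k ≤ n) (f : FreeAlgebra F (Fin m))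
    (hnc : ∃ a : Fin m → Matrix (Fin k) (Fin k) F,
      ∀ c : F, FreeAlgebra.lift F a f ≠ c • (1 : Matrix (Fin k) (Fin k) F)) (c : F) :
    FreeAlgebra.lift F (genMat F m (Fin n)) f ≠ algebraMap F _ c := by
  induction n, hkn using Nat.le_induction with
  | base =>
    obtain ⟨a, ha⟩ := hnc
    intro h
    apply ha c
    let ev : MvPolynomial (Fin m × Fin k × Fin k) F →ₐ[F] F :=
      MvPolynomial.aeval fun p => a p.1 p.2.1 p.2.2
    have h1 := congrArg ev.mapMatrix h
    rw [map_lift_freeAlgebra, AlgHom.commutes, Algebra.algebraMap_eq_smul_one] at h1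
    rw [← h1]
    congr 2
    funext l
    ext i j
    simp [ev, genMat]
  | succ n hn ih =>
    intro h
    apply ih
    have h1 := congrArg (spec F m n).mapMatrix h
    rw [spec_lift, AlgHom.commutes] at h1
    ext1 i j
    have h2 := congrFun (congrFun h1 (finSumFinEquiv (Sum.inl i))) (finSumFinEquiv (Sum.inl j))
    simpa [Matrix.algebraMap_matrix_apply] using h2

theorem main_induction (F : Type) [Field F] (m k n : ℕ) (hkn : k ≤ n) (f : FreeAlgebra F (Fin m))
    (hnc : ∃ a : Fin m → Matrix (Fin k) (Fin k) F,
      ∀ c : F, FreeAlgebra.lift F a f ≠ c • (1 : Matrix (Fin k) (Fin k) F))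
    (α : Fin n → AlgebraicClosure (FractionRing (MvPolynomial (Fin m × Fin n × Fin n) F)))
    (hα : (FreeAlgebra.lift F (genMat F m (Fin n)) f).charpoly.map
        (algebraMap (MvPolynomial (Fin m × Fin n × Fin n) F)
          (AlgebraicClosure (FractionRing (MvPolynomial (Fin m × Fin n × Fin n) F))))
      = ∏ i : Fin n, (Polynomial.X - Polynomial.C (α i))) :
    ∃ (ι : Type) (_ : Fintype ι) (s : ι → Fin n), Fintype.card ι = n - k ∧
      AlgebraicIndependent F (fun i => α (s i)) := by
  induction n, hkn using Nat.le_induction with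
  | base => 
    refine ⟨Empty, inferInstance, Empty.elim, by simp, ?_⟩
    rw [algebraicIndependent_empty_type_iff]
    exact (algebraMap F _).injective
  | succ n hn ih =>
    let R := MvPolynomial (Fin m × Fin (n+1) × Fin (n+1)) F
    let Ω := AlgebraicClosure (FractionRing R)
    let K := AlgebraicClosure (FractionRing (MvPolynomial (Fin m × Fin n × Fin n) F))
    have hRΩ : Function.Injective (algebraMap R Ω) := by
      rw [IsScalarTower.algebraMap_eq R (FractionRing R) Ω]
      exact (algebraMap (FractionRing R) Ω).injective.comp (IsFractionRing.injective R _)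
    set c := FreeAlgebra.lift F (fun _ => (0 : F)) f with hc
    let g : R →ₐ[F] K := (IsScalarTower.toAlgHom F _ K).comp (spec F m n)
    let B := integralClosure R Ω
    have hRB : Function.Injective (algebraMap R B) := by
      intro x y h
      exact hRΩ (congrArg Subtype.val h)
    obtain ⟨h, hh⟩ := exists_ringHom_extend (B := B) hRB (g : R →+* K)
    let φ : B →ₐ[F] K := 
      { h with 
        commutes' := fun r => by
          have : algebraMap F B r = algebraMap R B (algebraMap F R r) :=
            IsScalarTower.algebraMap_apply F R B r
          rw [this]
          exact (DFunLike.congr_fun hh _).trans (g.commutes r) }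
    let M := FreeAlgebra.lift F (genMat F m (Fin (n+1))) f
    have hroot : ∀ i, (M.charpoly.map (algebraMap R Ω)).eval (α i) = 0 := by
      intro i
      rw [hα, Polynomial.eval_prod]
      exact Finset.prod_eq_zero (Finset.mem_univ i) (by simp)
    have hint : ∀ i, IsIntegral R (α i) := fun i =>
      ⟨M.charpoly, Matrix.charpoly_monic _, by rw [← Polynomial.eval_map]; exact hroot i⟩
    let a : Fin (n+1) → B := fun i => ⟨α i, hint i⟩
    have haB : M.charpoly.map (algebraMap R B) = ∏ i, (Polynomial.X - Polynomial.C (a i)) := by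
      apply Polynomial.map_injective (algebraMap B Ω) Subtype.val_injective
      rw [Polynomial.map_map, ← IsScalarTower.algebraMap_eq, hα, Polynomial.map_prod]
      simp [a]
    have hK : M.charpoly.map (g : R →+* K) = ∏ i, (Polynomial.X - Polynomial.C (φ (a i))) := by
      have := congrArg (Polynomial.map h) haB
      rw [Polynomial.map_map, hh, Polynomial.map_prod] at this
      rw [this]
      simp [φ]
    have hK2 : M.charpoly.map (g : R →+* K) =
        ((FreeAlgebra.lift F (genMat F m (Fin n)) f).charpoly.map (algebraMap _ K)) *
          (Polynomial.X - Polynomial.C (algebraMap F K c)) := by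
      have := congrArg (Polynomial.map (algebraMap _ K)) (spec_charpoly F m n f)
      rw [Polynomial.map_map, Polynomial.map_mul, Polynomial.map_sub, Polynomial.map_X,
        Polynomial.map_C, ← IsScalarTower.algebraMap_apply] at this
      exact this
    obtain ⟨i0, hi0⟩ : ∃ i0, φ (a i0) = algebraMap F K c := by
      have := congrArg (Polynomial.eval (algebraMap F K c)) (hK.symm.trans hK2)
      rw [Polynomial.eval_prod, Polynomial.eval_mul] at this
      simp only [Polynomial.eval_sub, Polynomial.eval_X, Polynomial.eval_C, sub_self, mul_zero] at this
      obtain ⟨i, -, hi⟩ := Finset.prod_eq_zero_iff.1 this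
      exact ⟨i, (sub_eq_zero.1 hi).symm⟩
    obtain ⟨ι, _, s, hs, hind⟩ := ih (fun j => φ (a (i0.succAbove j))) (by
      have := hK2.symm.trans hK
      rw [Fin.prod_univ_succAbove _ i0, hi0, mul_comm] at this
      exact mul_left_cancel₀ (Polynomial.X_sub_C_ne_zero _) this)
    have hne : a i0 ≠ algebraMap F B c := by
      intro hEq
      have hα0 : α i0 = algebraMap F Ω c := congrArg Subtype.val hEq
      have h1 := hroot i0
      rw [hα0, IsScalarTower.algebraMap_apply F R Ω, Polynomial.eval_map,
        Polynomial.eval₂_at_apply, map_eq_zero_iff _ hRΩ, Matrix.eval_charpoly] at h1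
      have hM : M ≠ algebraMap F _ c := nonscalar F m k (n+1) (by omega) f hnc c
      have h2 := generic_det_ne_zero' m n (algebraMap F _ c - f) (by
        rw [map_sub, AlgHom.commutes]
        exact sub_ne_zero.2 hM.symm)
      apply h2
      rw [map_sub, AlgHom.commutes]
      rw [← h1]
      congr 2
    have hfin := indep_step φ (fun i => a (i0.succAbove (s i))) hind c (a i0) hne hi0
    refine ⟨Option ι, inferInstance, fun o => o.elim i0 (fun i => i0.succAbove (s i)), ?_, ?_⟩
    · rw [Fintype.card_option, hs]; omega
    · have := hfin.map' (f := (IsScalarTower.toAlgHom F B Ω)) Subtype.val_injective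
      convert this using 1
      funext o
      cases o <;> rfl



/-- Let `F` be algebraically closed, `f` noncentral on `M_k(F)`, `n ≥ k`, and let
`Y₁,…,Y_m` be the generic `n × n` matrices over `R = F[x^{(ℓ)}_{i,j}]`. If
`α₁,…,α_n` are the roots (with multiplicity) of the characteristic polynomial of
`f(Y₁,…,Y_m)` in an algebraic closure `Ω` of `K = Frac R`, then the subfield
`F(α₁,…,α_n)` of `Ω` has transcendence degree at least `n - k` over `F`, i.e.
it contains `n - k` elements that are algebraically independent over `F`. -/
theorem trdeg_of_eigenvalues (F : Type) [Field F] [IsAlgClosed F] (m k n : ℕ)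
    (hk : 1 ≤ k) (hkn : k ≤ n) (f : FreeAlgebra F (Fin m))
    (hnc : ∃ a : Fin m → Matrix (Fin k) (Fin k) F,
      ∀ c : F, FreeAlgebra.lift F a f ≠ c • (1 : Matrix (Fin k) (Fin k) F))
    (α : Fin n → AlgebraicClosure (FractionRing (MvPolynomial (Fin m × Fin n × Fin n) F)))
    (hα : (Matrix.charpoly
        (FreeAlgebra.lift F (fun ℓ : Fin m =>
          (Matrix.of fun i j : Fin n => MvPolynomial.X (ℓ, i, j) :
            Matrix (Fin n) (Fin n) (MvPolynomial (Fin m × Fin n × Fin n) F))) f)).map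
        (algebraMap (MvPolynomial (Fin m × Fin n × Fin n) F)
          (AlgebraicClosure (FractionRing (MvPolynomial (Fin m × Fin n × Fin n) F))))
      = ∏ i : Fin n, (Polynomial.X - Polynomial.C (α i))) :
    ∃ s : Finset (AlgebraicClosure (FractionRing (MvPolynomial (Fin m × Fin n × Fin n) F))),
      (↑s : Set (AlgebraicClosure (FractionRing (MvPolynomial (Fin m × Fin n × Fin n) F)))) ⊆
        (IntermediateField.adjoin F (Set.range α) :
          Set (AlgebraicClosure (FractionRing (MvPolynomial (Fin m × Fin n × Fin n) F)))) ∧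
      s.card = n - k ∧
      AlgebraicIndependent F ((↑) : s →
        AlgebraicClosure (FractionRing (MvPolynomial (Fin m × Fin n × Fin n) F))) := by
  classical
  obtain ⟨ι, _, s, hs, hind⟩ := main_induction F m k n hkn f hnc α hα
  refine ⟨Finset.univ.image (fun i => α (s i)), ?_, ?_, ?_⟩
  · intro x hx
    simp only [Finset.coe_image, Finset.coe_univ, Set.image_univ, Set.mem_range] at hx
    obtain ⟨i, rfl⟩ := hx
    exact IntermediateField.subset_adjoin F _ ⟨s i, rfl⟩
  · rw [Finset.card_image_of_injective _ hind.injective, Finset.card_univ, hs]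
  · have h1 := hind.coe_range
    have h2 : (↑(Finset.univ.image (fun i => α (s i))) : Set _) = Set.range (fun i => α (s i)) := by
      simp
    rw [← h2] at h1
    exact h1
end

section
/- Let F be an algebraically closed field, f ∈ F⟨X_1,…,X_m⟩, and k ≥ 1 such that f is noncentral on M_k(F). Let n ≥ k, let Y_1,…,Y_m be generic n×n matrices over F, and let c_1,…,c_n ∈ R be the coefficients of the characteristic polynomial of f(Y_1,…,Y_m), i.e. the characteristic polynomial equals t^n − c_1 t^{n−1} + c_2 t^{n−2} − ⋯ + (−1)^n c_n. Then the subfield F(c_1,…,c_n) of K = Frac(R) has transcendence degree at least n − k over F. -/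
namespace TrdegAux
open MvPolynomial

/-- generic matrices -/
noncomputable def gen (F : Type) [Field F] (m : ℕ) (G : Type) (l : Fin m) :
    Matrix G G (MvPolynomial (Fin m × G × G) F) :=
  Matrix.of fun i j => X (l, i, j)

theorem lift_map {F : Type} [Field F] {m : ℕ} {G : Type} [Fintype G] [DecidableEq G]
    {S T : Type} [CommRing S] [CommRing T] [Algebra F S] [Algebra F T] (φ : S →ₐ[F] T)
    (Y : Fin m → Matrix G G S) (f : FreeAlgebra F (Fin m)) :
    (FreeAlgebra.lift F Y f).map φ = FreeAlgebra.lift F (fun l => (Y l).map φ) f := by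
  have : (φ.mapMatrix (m := G)).comp (FreeAlgebra.lift F Y)
      = FreeAlgebra.lift F (fun l => (Y l).map φ) := by
    ext l : 1
    funext i
    simp [AlgHom.mapMatrix_apply]
  exact DFunLike.congr_fun this f

theorem lift_reindex {F : Type} [Field F] {m : ℕ} {G H : Type} [Fintype G] [DecidableEq G]
    [Fintype H] [DecidableEq H]
    {S : Type} [CommRing S] [Algebra F S] (e : G ≃ H)
    (Y : Fin m → Matrix G G S) (f : FreeAlgebra F (Fin m)) :
    Matrix.reindex e e (FreeAlgebra.lift F Y f)
      = FreeAlgebra.lift F (fun l => Matrix.reindex e e (Y l)) f := by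
  have : ((Matrix.reindexAlgEquiv F S e).toAlgHom).comp (FreeAlgebra.lift F Y)
      = FreeAlgebra.lift F (fun l => Matrix.reindex e e (Y l)) := by
    ext l : 1
    funext i
    simp
  exact DFunLike.congr_fun this f

theorem lift_fromBlocks {F : Type} [Field F] {m : ℕ} {G H : Type} [Fintype G] [DecidableEq G]
    [Fintype H] [DecidableEq H]
    {S : Type} [CommRing S] [Algebra F S]
    (Y : Fin m → Matrix G G S) (Z : Fin m → Matrix H H S) (f : FreeAlgebra F (Fin m)) :
    FreeAlgebra.lift F (fun l => Matrix.fromBlocks (Y l) 0 0 (Z l)) f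
      = Matrix.fromBlocks (FreeAlgebra.lift F Y f) 0 0 (FreeAlgebra.lift F Z f) := by
  induction f using FreeAlgebra.induction with
  | grade0 r =>
    simp only [AlgHom.commutes]
    simp only [Algebra.algebraMap_eq_smul_one]
    rw [← Matrix.fromBlocks_one, Matrix.fromBlocks_smul]
    simp
  | grade1 x => simp
  | mul a b ha hb => simp [ha, hb, Matrix.fromBlocks_multiply]
  | add a b ha hb => simp [ha, hb, Matrix.fromBlocks_add]

theorem coeff_mem {F S : Type} [Field F] [CommRing S] [Algebra F S] (A : Subalgebra F S)
    (p : Polynomial S) (r : F)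
    (h : ∀ i, (p * (Polynomial.X - Polynomial.C (algebraMap F S r))).coeff i ∈ A) (i : ℕ) :
    p.coeff i ∈ A := by
  have key : ∀ d i, p.natDegree < i + d → p.coeff i ∈ A := by
    intro d
    induction d with
    | zero => intro i hi; rw [Polynomial.coeff_eq_zero_of_natDegree_lt (by simpa using hi)]
              exact A.zero_mem
    | succ d ih =>
      intro i hi
      have h1 := ih (i + 1) (by omega)
      have h2 := h (i + 1)
      rw [mul_sub, Polynomial.coeff_sub, Polynomial.coeff_mul_X, Polynomial.coeff_mul_C] at h2
      have := A.add_mem h2 (A.mul_mem h1 (A.algebraMap_mem r))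
      simpa using this
  exact key (p.natDegree + 1) i (by omega)

theorem indep_step {F R S : Type} [Field F] [CommRing R] [IsDomain R] [CommRing S]
    [Algebra F R] [Algebra F S] (φ : R →ₐ[F] S) {r : ℕ} (a : Fin r → R)
    (ha : AlgebraicIndependent F (fun i => φ (a i))) (δ : R) (hδ : δ ≠ 0) (hφ : φ δ = 0) :
    AlgebraicIndependent F (fun o : Option (Fin r) => o.elim δ a) := by
  have ha0 : AlgebraicIndependent F a := AlgebraicIndependent.of_comp φ ha
  rw [ha0.option_iff_transcendental]
  intro halg
  obtain ⟨q, hq0, hq⟩ := IsAlgebraic.exists_nonzero_coeff_and_aeval_eq_zero halg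
    (mem_nonZeroDivisors_of_ne_zero hδ)
  apply hq0
  have h1 : φ (q.coeff 0 : R) = 0 := by
    have h2 := congrArg φ hq
    rw [← Polynomial.divX_mul_X_add q] at h2
    simpa [hφ] using h2
  have hmem := (q.coeff 0).2
  obtain ⟨p, hp⟩ := (Algebra.adjoin_range_eq_range_aeval F a).le hmem
  have hp' : aeval a p = (q.coeff 0 : R) := hp
  rw [← hp'] at h1
  have h3 : aeval (fun i => φ (a i)) p = 0 := by
    rw [← h1, ← MvPolynomial.comp_aeval_apply]; 
  have h4 : p = 0 := by
    apply ha
    simpa using h3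
  rw [h4, map_zero] at hp'
  exact Subtype.ext hp'.symm

section Amitsur
variable {F : Type} [Field F] {m : ℕ} {G : Type} [AddCommGroup G] [Fintype G] [DecidableEq G]

/-- simultaneous shift of the indices -/
noncomputable def shift (F : Type) [Field F] (m : ℕ) {G : Type} [AddCommGroup G] (h : G) :
    MvPolynomial (Fin m × G × G) F →ₐ[F] MvPolynomial (Fin m × G × G) F :=
  rename fun x => (x.1, x.2.1 + h, x.2.2 + h)

theorem shift_injective (h : G) : Function.Injective (shift F m h) := by
  apply rename_injective
  rintro ⟨a, b, c⟩ ⟨a', b', c'⟩ hh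
  simpa using hh

/-- homogeneous, shift equivariant matrices -/
def Good (ν : ℕ →+ G) (a : Matrix G G (Polynomial (MvPolynomial (Fin m × G × G) F))) : Prop :=
  (∀ i j e, (a i j).coeff e ≠ 0 → i + ν e = j) ∧
  (∀ i j h, a (i + h) (j + h) = (a i j).map (shift F m h : _ →+* _))

theorem Good.add {ν : ℕ →+ G} {a b : Matrix G G (Polynomial (MvPolynomial (Fin m × G × G) F))}
    (ha : Good ν a) (hb : Good ν b) : Good ν (a + b) := by
  refine ⟨fun i j e h => ?_, fun i j h => ?_⟩
  · by_contra hne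
    apply h
    have h1 : (a i j).coeff e = 0 := by
      by_contra h1; exact hne (ha.1 _ _ _ h1)
    have h2 : (b i j).coeff e = 0 := by
      by_contra h1; exact hne (hb.1 _ _ _ h1)
    simp [h1, h2]
  · simp [ha.2, hb.2]

theorem Good.mul {ν : ℕ →+ G} {a b : Matrix G G (Polynomial (MvPolynomial (Fin m × G × G) F))}
    (ha : Good ν a) (hb : Good ν b) : Good ν (a * b) := by
  refine ⟨fun i j e h => ?_, fun i j h => ?_⟩
  · rw [Matrix.mul_apply, Polynomial.finsetSum_coeff] at h
    obtain ⟨k, -, hk⟩ := Finset.exists_ne_zero_of_sum_ne_zero h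
    rw [Polynomial.coeff_mul] at hk
    obtain ⟨⟨x, y⟩, hxy, hk⟩ := Finset.exists_ne_zero_of_sum_ne_zero hk
    have h1 := ha.1 _ _ _ (left_ne_zero_of_mul hk)
    have h2 := hb.1 _ _ _ (right_ne_zero_of_mul hk)
    rw [Finset.HasAntidiagonal.mem_antidiagonal] at hxy
    simp only at hxy h1 h2
    rw [← h2, ← h1, ← hxy, map_add, add_assoc]
  · rw [Matrix.mul_apply, Matrix.mul_apply, Polynomial.map_sum,
      ← Equiv.sum_comp (Equiv.addRight h)]
    simp [ha.2, hb.2]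

theorem Good.algebraMap (ν : ℕ →+ G) (r : F) :
    Good ν (algebraMap F (Matrix G G (Polynomial (MvPolynomial (Fin m × G × G) F))) r) := by
  refine ⟨fun i j e h => ?_, fun i j h => ?_⟩
  · rw [Matrix.algebraMap_matrix_apply] at h
    split_ifs at h with hij
    · rw [Polynomial.algebraMap_apply, Polynomial.coeff_C] at h
      split_ifs at h with he
      · simp [he, hij]
      · simp at h
    · simp at h
  · simp only [Matrix.algebraMap_matrix_apply, add_left_inj]
    split_ifs
    · simp [Polynomial.algebraMap_apply]
    · simp

theorem Good.lift (ν : ℕ →+ G) (b : Fin m → Matrix G G (Polynomial (MvPolynomial (Fin m × G × G) F)))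
    (hb : ∀ l, Good ν (b l)) (f : FreeAlgebra F (Fin m)) : Good ν (FreeAlgebra.lift F b f) := by
  induction f using FreeAlgebra.induction with
  | grade0 r => rw [AlgHom.commutes]; exact Good.algebraMap ν r
  | grade1 x => simpa using hb x
  | mul a b ha hb => rw [map_mul]; exact ha.mul hb
  | add a b ha hb => rw [map_add]; exact ha.add hb

theorem Good.det_ne_zero {ν : ℕ →+ G}
    {a : Matrix G G (Polynomial (MvPolynomial (Fin m × G × G) F))}
    (ha : Good ν a) (h0 : a ≠ 0) : a.det ≠ 0 := by
  classical
  have hex : ∃ e, ∃ i j, (a i j).coeff e ≠ 0 := by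
    by_contra hcon
    push Not at hcon
    apply h0
    apply Matrix.ext
    intro i j
    apply Polynomial.ext
    intro e
    simpa using hcon e i j
  set e := Nat.find hex with he
  obtain ⟨i₀, j₀, hij⟩ := Nat.find_spec hex
  rw [← he] at hij
  have hmin : ∀ i j d, d < e → (a i j).coeff d = 0 := by
    intro i j d hd
    have := Nat.find_min hex hd
    push Not at this
    exact this i j
  have hdvd : ∀ i j, ∃ q, a i j = Polynomial.X ^ e * q := fun i j =>
    Polynomial.X_pow_dvd_iff.2 (hmin i j)
  choose q hq using hdvd
  have haq : a = (Polynomial.X ^ e : Polynomial (MvPolynomial (Fin m × G × G) F)) • Matrix.of q := by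
    ext i j : 2
    simp [hq]
  have hcoeff : ∀ i j, (q i j).coeff 0 = (a i j).coeff e := by
    intro i j
    rw [hq i j, Polynomial.coeff_X_pow_mul']
    simp
  have hM : ∀ i, (q i (i + ν e)).coeff 0 ≠ 0 := by
    intro i
    have h1 := ha.1 _ _ _ hij
    have h2 := ha.2 i₀ j₀ (i - i₀)
    have h3 : i₀ + (i - i₀) = i := by abel
    have h4 : j₀ + (i - i₀) = i + ν e := by rw [← h1]; abel
    rw [h3, h4] at h2
    rw [hcoeff, h2, Polynomial.coeff_map]
    intro h5
    exact hij (shift_injective (F := F) (m := m) (i - i₀) (by simpa using h5))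
  rw [haq, Matrix.det_smul]
  refine mul_ne_zero (pow_ne_zero _ (pow_ne_zero _ Polynomial.X_ne_zero)) ?_
  intro hdet
  have h6 := congrArg (Polynomial.constantCoeff) hdet
  rw [RingHom.map_det, map_zero] at h6
  have h7 := Matrix.det_permute' (Equiv.addRight (ν e))
    (Polynomial.constantCoeff.mapMatrix (Matrix.of q))
  rw [h6, mul_zero] at h7
  have h8 : (Polynomial.constantCoeff.mapMatrix (Matrix.of q)).submatrix id (Equiv.addRight (ν e))
      = Matrix.diagonal (fun i => (q i (i + ν e)).coeff 0) := by
    apply Matrix.ext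
    intro i j
    rw [Matrix.diagonal_apply]
    split_ifs with hij'
    · subst hij'
      simp
    · simp only [RingHom.mapMatrix_apply, Matrix.submatrix_apply, Matrix.map_apply, id_eq,
        Equiv.coe_addRight, Matrix.of_apply, Polynomial.constantCoeff_apply]
      rw [hcoeff]
      by_contra h9
      exact hij' (add_right_cancel (ha.1 _ _ _ h9))
  rw [h8, Matrix.det_diagonal] at h7
  exact Finset.prod_ne_zero_iff.2 (fun i _ => hM i) h7

theorem amitsur (ν : ℕ →+ G) (hν : Function.Surjective ν) (f : FreeAlgebra F (Fin m))
    (hf : FreeAlgebra.lift F (gen F m G) f ≠ 0) : (FreeAlgebra.lift F (gen F m G) f).det ≠ 0 := by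
  choose wt hwt using hν
  let φ : MvPolynomial (Fin m × G × G) F →ₐ[F] Polynomial (MvPolynomial (Fin m × G × G) F) :=
    aeval fun x => Polynomial.C (X x) * Polynomial.X ^ (wt (x.2.2 - x.2.1))
  have hgood : Good ν (FreeAlgebra.lift F (fun l => (gen F m G l).map φ) f) := by
    apply Good.lift
    intro l
    refine ⟨fun i j e h => ?_, fun i j h => ?_⟩
    · simp only [gen, Matrix.map_apply, Matrix.of_apply, φ, aeval_X, Polynomial.coeff_C_mul,
        Polynomial.coeff_X_pow] at h
      split_ifs at h with he
      · rw [he, hwt]; abel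
      · simp at h
    · simp [gen, φ, shift]
  let ψ : Polynomial (MvPolynomial (Fin m × G × G) F) →ₐ[F] MvPolynomial (Fin m × G × G) F :=
    (Polynomial.aeval (R := MvPolynomial (Fin m × G × G) F) 1).restrictScalars F
  rw [← lift_map] at hgood
  have hne : (FreeAlgebra.lift F (gen F m G) f).map φ ≠ 0 := by
    intro h0
    apply hf
    have h1 := congrArg (fun M => Matrix.map M ψ) h0
    simp only [lift_map] at h1
    have h2 : ∀ l, ((gen F m G l).map φ).map ψ = gen F m G l := by
      intro l
      ext i j : 2
      simp [gen, φ, ψ]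
    simp only [h2] at h1
    rw [h1]
    ext i j : 2
    simp
  have hd := hgood.det_ne_zero hne
  intro h0
  apply hd
  have := φ.map_det (FreeAlgebra.lift F (gen F m G) f)
  rw [h0, map_zero] at this
  exact this.symm
end Amitsur

theorem amitsur_fin {F : Type} [Field F] {m n : ℕ} (f : FreeAlgebra F (Fin m))
    (hf : FreeAlgebra.lift F (gen F m (Fin (n + 1))) f ≠ 0) :
    (FreeAlgebra.lift F (gen F m (Fin (n + 1))) f).det ≠ 0 := by
  refine amitsur (multiplesHom (Fin (n + 1)) 1) ?_ f hf
  intro i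
  refine ⟨i.val, ?_⟩
  have : ∀ e : ℕ, ((e • (1 : Fin (n + 1)) : Fin (n + 1)) : ℕ) = e % (n + 1) := by
    intro e
    induction e with
    | zero => simp
    | succ e ih => rw [succ_nsmul, Fin.val_add, ih]; simp [Fin.val_one']
  ext
  simp [this, Nat.mod_eq_of_lt i.2]

theorem not_scalar {F : Type} [Field F] {m k r : ℕ} (f : FreeAlgebra F (Fin m))
    (hnc : ∃ a : Fin m → Matrix (Fin k) (Fin k) F,
      ∀ c : F, FreeAlgebra.lift F a f ≠ c • (1 : Matrix (Fin k) (Fin k) F)) (c : F) :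
    FreeAlgebra.lift F (gen F m (Fin (k + r))) (algebraMap F _ c - f) ≠ 0 := by
  obtain ⟨a, ha⟩ := hnc
  intro h0
  apply ha c
  let B : Fin m → Matrix (Fin k ⊕ Fin r) (Fin k ⊕ Fin r) F :=
    fun l => Matrix.fromBlocks (a l) 0 0 ((0 : Fin m → Matrix (Fin r) (Fin r) F) l)
  let φ : MvPolynomial (Fin m × Fin (k + r) × Fin (k + r)) F →ₐ[F] F :=
    aeval fun x => Matrix.reindex finSumFinEquiv finSumFinEquiv (B x.1) x.2.1 x.2.2
  have h1 := congrArg (fun M => Matrix.map M φ) h0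
  simp only [lift_map] at h1
  have h2 : ∀ l, (gen F m (Fin (k + r)) l).map φ
      = Matrix.reindex finSumFinEquiv finSumFinEquiv (B l) := by
    intro l
    ext i j : 2
    simp [gen, φ]
  simp only [h2] at h1
  rw [← lift_reindex] at h1
  have h3 : (Matrix.map (0 : Matrix (Fin (k + r)) (Fin (k + r)) _) φ) = 0 := by
    ext i j : 2
    simp
  rw [h3] at h1
  have h4 : FreeAlgebra.lift F B (algebraMap F _ c - f) = 0 := by
    apply (Matrix.reindex finSumFinEquiv finSumFinEquiv).injective
    rw [h1]; rfl
  simp only [B] at h4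
  rw [lift_fromBlocks] at h4
  have h5 := congrArg Matrix.toBlocks₁₁ h4
  rw [Matrix.toBlocks_fromBlocks₁₁, map_sub, AlgHom.commutes] at h5
  rw [← Algebra.algebraMap_eq_smul_one]
  exact (sub_eq_zero.1 h5).symm

theorem main_ind {F : Type} [Field F] {m k : ℕ} (hk : 1 ≤ k) (f : FreeAlgebra F (Fin m))
    (hnc : ∃ a : Fin m → Matrix (Fin k) (Fin k) F,
      ∀ c : F, FreeAlgebra.lift F a f ≠ c • (1 : Matrix (Fin k) (Fin k) F)) (r : ℕ) :
    ∃ a : Fin r → MvPolynomial (Fin m × Fin (k + r) × Fin (k + r)) F,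
      AlgebraicIndependent F a ∧ ∀ i, a i ∈ Algebra.adjoin F
        (Set.range (FreeAlgebra.lift F (gen F m (Fin (k + r))) f).charpoly.coeff) := by
  induction r with
  | zero =>
    refine ⟨fun i => i.elim0, ?_, fun i => i.elim0⟩
    rw [algebraicIndependent_empty_type_iff]
    exact (algebraMap F _).injective
  | succ r ih =>
    obtain ⟨a', ha', hmem'⟩ := ih
    let c : F := FreeAlgebra.lift F (fun _ : Fin m => (0 : F)) f
    let S := MvPolynomial (Fin m × Fin (k + r) × Fin (k + r)) F
    let B : Fin m → Matrix (Fin (k + r) ⊕ Fin 1) (Fin (k + r) ⊕ Fin 1) S :=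
      fun l => Matrix.fromBlocks (gen F m (Fin (k + r)) l) 0 0
        ((fun _ => 0 : Fin m → Matrix (Fin 1) (Fin 1) S) l)
    let φ : MvPolynomial (Fin m × Fin (k + (r + 1)) × Fin (k + (r + 1))) F →ₐ[F] S :=
      aeval fun x => Matrix.reindex finSumFinEquiv finSumFinEquiv (B x.1) x.2.1 x.2.2
    set χ := (FreeAlgebra.lift F (gen F m (Fin (k + r))) f).charpoly with hχ
    set χ' := (FreeAlgebra.lift F (gen F m (Fin (k + (r + 1)))) f).charpoly with hχ'
    have h2 : ∀ l, (gen F m (Fin (k + (r + 1))) l).map φ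
        = Matrix.reindex finSumFinEquiv finSumFinEquiv (B l) := by
      intro l
      ext i j : 2
      simp [gen, φ]
    have hzero : FreeAlgebra.lift F (fun _ => 0 : Fin m → Matrix (Fin 1) (Fin 1) S) f
        = algebraMap F _ c := by
      have : FreeAlgebra.lift F (fun _ => 0 : Fin m → Matrix (Fin 1) (Fin 1) S)
        = (Algebra.ofId F (Matrix (Fin 1) (Fin 1) S)).comp
            (FreeAlgebra.lift F (fun _ : Fin m => (0 : F))) := by
        ext l : 1
        funext i
        simp
      rw [this]; rfl
    have hmap : χ'.map (φ : _ →+* S)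
        = χ * (Polynomial.X - Polynomial.C (algebraMap F S c)) := by
      rw [hχ', ← Matrix.charpoly_map]
      have h3 : (FreeAlgebra.lift F (gen F m (Fin (k + (r + 1)))) f).map (φ : _ →+* S)
          = Matrix.reindex finSumFinEquiv finSumFinEquiv (FreeAlgebra.lift F B f) := by
        rw [lift_reindex]
        simp only [← h2]
        exact lift_map φ _ f
      rw [h3, Matrix.charpoly_reindex]
      simp only [B]
      rw [lift_fromBlocks, Matrix.charpoly_fromBlocks_zero₁₂, hzero]
      congr 1
      simp [Matrix.charpoly, Matrix.charmatrix_apply, Matrix.algebraMap_matrix_apply]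
    have hmemS : ∀ i, χ.coeff i ∈ (Algebra.adjoin F (Set.range χ'.coeff)).map φ := by
      apply coeff_mem _ _ c
      intro i
      rw [← hmap, Polynomial.coeff_map]
      exact ⟨χ'.coeff i, Algebra.subset_adjoin ⟨i, rfl⟩, rfl⟩
    have hle : Algebra.adjoin F (Set.range χ.coeff)
        ≤ (Algebra.adjoin F (Set.range χ'.coeff)).map φ := by
      rw [Algebra.adjoin_le_iff]
      rintro _ ⟨i, rfl⟩
      exact hmemS i
    choose a ha hφa using fun i => hle (hmem' i)
    have hφa' : (fun i => φ (a i)) = a' := funext hφa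
    let δ := χ'.eval (algebraMap F _ c)
    have hδ : δ ≠ 0 := by
      have h4 := not_scalar (r := r + 1) f hnc c
      have h5 := amitsur_fin (n := k + r) (algebraMap F _ c - f) h4
      have h6 : δ = (FreeAlgebra.lift F (gen F m (Fin (k + r + 1))) (algebraMap F _ c - f)).det := by
        simp only [δ, hχ']
        rw [Matrix.eval_charpoly, map_sub, AlgHom.commutes]
        rfl
      rw [h6]
      exact h5
    have hφδ : φ δ = 0 := by
      have : φ δ = (χ'.map (φ : _ →+* S)).eval (algebraMap F S c) := by
        rw [← AlgHom.commutes φ c]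
        exact (Polynomial.eval_map_apply φ.toRingHom _).symm
      rw [this, hmap]
      simp
    have hind := indep_step φ a (by rw [hφa']; exact ha') δ hδ hφδ
    refine ⟨_, hind.comp (finSuccEquiv r) (finSuccEquiv r).injective, fun i => ?_⟩
    simp only [Function.comp]
    rcases finSuccEquiv r i with _ | j
    · simp only [Option.elim, δ]
      rw [Polynomial.eval_eq_sum_range]
      refine Subalgebra.sum_mem _ fun i _ => Subalgebra.mul_mem _ ?_ ?_
      · exact Algebra.subset_adjoin ⟨i, rfl⟩
      · exact Subalgebra.pow_mem _ (Subalgebra.algebraMap_mem _ _) _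
    · exact ha j

theorem final {F R K ι : Type} [Field F] [CommRing R] [IsDomain R] [Algebra F R] [Field K]
    [Algebra R K] [IsFractionRing R K] [Algebra F K] [IsScalarTower F R K] {r : ℕ}
    (c : ι → R) (a : Fin r → R) (ha : AlgebraicIndependent F a)
    (hmem : ∀ i, a i ∈ Algebra.adjoin F (Set.range c)) :
    ∃ s : Finset K, (↑s : Set K) ⊆
        (IntermediateField.adjoin F (Set.range fun i => algebraMap R K (c i)) : Set K) ∧
      s.card = r ∧ AlgebraicIndependent F ((↑) : s → K) := by
  let ι : R →ₐ[F] K := IsScalarTower.toAlgHom F R K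
  have hι : Function.Injective ι := IsFractionRing.injective R K
  have hb : AlgebraicIndependent F (ι ∘ a) := ha.map' hι
  classical
  refine ⟨Finset.univ.image (ι ∘ a), ?_, ?_, ?_⟩
  · intro x hx
    simp only [Finset.coe_image, Finset.coe_univ, Set.image_univ] at hx
    obtain ⟨i, rfl⟩ := hx
    have h1 : ι (a i) ∈ (Algebra.adjoin F (Set.range c)).map ι := ⟨a i, hmem i, rfl⟩
    rw [AlgHom.map_adjoin, ← Set.range_comp] at h1
    exact IntermediateField.algebra_adjoin_le_adjoin F _ h1
  · rw [Finset.card_image_of_injective _ hb.injective]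
    simp
  · have h2 := AlgebraicIndependent.coe_range hb
    have h3 : ((Finset.univ.image (ι ∘ a) : Finset K) : Set K) = Set.range (ι ∘ a) := by
      simp [Function.comp_def]
    rw [← h3] at h2
    exact h2

end TrdegAux


/-- Let `F` be algebraically closed, `f` noncentral on `M_k(F)`, `n ≥ k`, and let
`Y₁,…,Y_m` be the generic `n × n` matrices over `R = F[x^{(ℓ)}_{i,j}]`. If
`c₁,…,c_n ∈ R` are the coefficients of the characteristic polynomial of
`f(Y₁,…,Y_m)`, i.e. the characteristic polynomial is
`tⁿ - c₁ tⁿ⁻¹ + c₂ tⁿ⁻² - ⋯ + (-1)ⁿ c_n`, then the subfield `F(c₁,…,c_n)` of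
`K = Frac R` has transcendence degree at least `n - k` over `F`, i.e. it contains
`n - k` elements algebraically independent over `F`. -/
theorem trdeg_of_charpoly_coeffs (F : Type) [Field F] [IsAlgClosed F] (m k n : ℕ)
    (hk : 1 ≤ k) (hkn : k ≤ n) (f : FreeAlgebra F (Fin m))
    (hnc : ∃ a : Fin m → Matrix (Fin k) (Fin k) F,
      ∀ c : F, FreeAlgebra.lift F a f ≠ c • (1 : Matrix (Fin k) (Fin k) F))
    (c : Fin n → MvPolynomial (Fin m × Fin n × Fin n) F)
    (hc : Matrix.charpoly
        (FreeAlgebra.lift F (fun ℓ : Fin m =>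
          (Matrix.of fun i j : Fin n => MvPolynomial.X (ℓ, i, j) :
            Matrix (Fin n) (Fin n) (MvPolynomial (Fin m × Fin n × Fin n) F))) f)
      = Polynomial.X ^ n + ∑ i : Fin n,
          Polynomial.C ((-1) ^ ((i : ℕ) + 1) * c i) * Polynomial.X ^ (n - ((i : ℕ) + 1))) :
    ∃ s : Finset (FractionRing (MvPolynomial (Fin m × Fin n × Fin n) F)),
      (↑s : Set (FractionRing (MvPolynomial (Fin m × Fin n × Fin n) F))) ⊆
        (IntermediateField.adjoin F
          (Set.range fun i : Fin n =>
            algebraMap (MvPolynomial (Fin m × Fin n × Fin n) F)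
              (FractionRing (MvPolynomial (Fin m × Fin n × Fin n) F)) (c i)) :
          Set (FractionRing (MvPolynomial (Fin m × Fin n × Fin n) F))) ∧
      s.card = n - k ∧
      AlgebraicIndependent F
        ((↑) : s → FractionRing (MvPolynomial (Fin m × Fin n × Fin n) F)) := by
  obtain ⟨r, rfl⟩ := Nat.exists_eq_add_of_le hkn
  obtain ⟨a, ha, hmem⟩ := TrdegAux.main_ind hk f hnc r
  have hle : Algebra.adjoin F
      (Set.range (FreeAlgebra.lift F (TrdegAux.gen F m (Fin (k + r))) f).charpoly.coeff)
      ≤ Algebra.adjoin F (Set.range c) := by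
    rw [Algebra.adjoin_le_iff]
    rintro _ ⟨d, rfl⟩
    have hc' : (FreeAlgebra.lift F (TrdegAux.gen F m (Fin (k + r))) f).charpoly = _ := hc
    rw [hc', Polynomial.coeff_add, Polynomial.finsetSum_coeff]
    refine Subalgebra.add_mem _ ?_ (Subalgebra.sum_mem _ fun i _ => ?_)
    · rw [Polynomial.coeff_X_pow]
      split_ifs
      · exact Subalgebra.one_mem _
      · exact Subalgebra.zero_mem _
    · rw [Polynomial.coeff_C_mul, Polynomial.coeff_X_pow]
      refine Subalgebra.mul_mem _ (Subalgebra.mul_mem _ ?_ (Algebra.subset_adjoin ⟨i, rfl⟩)) ?_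
      · exact Subalgebra.pow_mem _ (Subalgebra.neg_mem _ (Subalgebra.one_mem _)) _
      · split_ifs
        · exact Subalgebra.one_mem _
        · exact Subalgebra.zero_mem _
  have hfin := TrdegAux.final (K := FractionRing (MvPolynomial (Fin m × Fin (k + r) × Fin (k + r)) F))
    c a ha (fun i => hle (hmem i))
  rw [Nat.add_sub_cancel_left]
  exact hfin
end

section
/- Let F be a field, m, n ≥ 1, and let f = Σ_{σ ∈ Sym(m)} α_σ X_{σ(1)}⋯X_{σ(m)} ∈ F⟨X_1,…,X_m⟩ be multilinear. Let q_1,…,q_m ∈ ℤ with q_1 + ⋯ + q_m = 0, let μ_{i,j} (1 ≤ i ≤ m, 1 ≤ j ≤ n) be commuting indeterminates, let R = F[μ_{i,j}], and define x_i ∈ M_n(R) by (x_i)_{j,k} = μ_{i,j} if k = j + q_i and 1 ≤ j, k ≤ n, and (x_i)_{j,k} = 0 otherwise. For σ ∈ Sym(m) and 1 ≤ j ≤ n define j_1 = j and j_{t+1} = j_t + q_{σ(t)} for t = 1,…,m (so j_{m+1} = j), and say σ is kosher at j if 1 ≤ j_t ≤ n for all t = 1,…,m. Then f(x_1,…,x_m)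 is a diagonal matrix and, for every 1 ≤ j ≤ n, its (j,j) entry equals Σ_{σ kosher at j} α_σ · ∏_{t=1}^{m} μ_{σ(t), j_t}. -/
/-- The index `j_{t+1}` (0-indexed: `Sfun … 0 = j`, the paper's `j₁`):
`j_t = j + Σ_{s < t} q_{σ(s)}`. -/
def Sfun {m : ℕ} (n : ℕ) (q : Fin m → ℤ) (σ : Equiv.Perm (Fin m)) (j : Fin n)
    (t : Fin m) : ℤ :=
  (j : ℤ) + ∑ s ∈ Finset.univ.filter (fun s : Fin m => s < t), q (σ s)

/-- `σ` is kosher at `j`: all the indices `j₁, …, j_m` are legal row indices. -/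
def Kosher {m : ℕ} (n : ℕ) (q : Fin m → ℤ) (σ : Equiv.Perm (Fin m)) (j : Fin n) : Prop :=
  ∀ t : Fin m, 0 ≤ Sfun n q σ j t ∧ Sfun n q σ j t < n

/-- The indeterminate `μ_{i,z}` for an integer index `z`, extended by `0` outside
the legal range `0 ≤ z < n` (0-indexed). -/
noncomputable def muExt (F : Type) [Field F] (m n : ℕ) (i : Fin m) (z : ℤ) :
    MvPolynomial (Fin m × Fin n) F :=
  if h : 0 ≤ z ∧ z < n then MvPolynomial.X (i, ⟨z.toNat, by omega⟩) else 0

lemma ofFn_prod_entry (F : Type) [Field F] (m n : ℕ) (q : Fin m → ℤ)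
    (x : Fin m → Matrix (Fin n) (Fin n) (MvPolynomial (Fin m × Fin n) F))
    (hx : ∀ (i : Fin m) (j k : Fin n),
      x i j k = if (k : ℤ) = (j : ℤ) + q i then MvPolynomial.X (i, j) else 0)
    (j : Fin n) (l : ℕ) : ∀ (g : Fin l → Fin m) (k : Fin n),
    (List.ofFn fun t => x (g t)).prod j k =
      if (k : ℤ) = (j : ℤ) + ∑ s, q (g s) then
        ∏ t, muExt F m n (g t) ((j : ℤ) + ∑ s, if s < t then q (g s) else 0) else 0 := by
  induction l with
  | zero =>
    intro g k
    simp [Matrix.one_apply, Fin.ext_iff, eq_comm]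
  | succ l ih =>
    intro g k
    rw [List.ofFn_succ', List.concat_eq_append, List.prod_append, List.prod_singleton,
      Matrix.mul_apply]
    simp only [ih (fun t => g t.castSucc), hx, Fin.sum_univ_castSucc, Fin.prod_univ_castSucc,
      Fin.castSucc_lt_castSucc_iff, Fin.castSucc_lt_last, lt_irrefl, if_true, if_false,
      add_zero, not_lt.mpr (Fin.le_last _)]
    generalize (∏ t : Fin l, muExt F m n (g t.castSucc)
      ((j : ℤ) + ∑ s, if s < t then q (g s.castSucc) else 0)) = A
    rw [← add_assoc]
    generalize (j : ℤ) + ∑ s : Fin l, q (g s.castSucc) = z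
    by_cases hz : 0 ≤ z ∧ z < n
    · rw [Finset.sum_eq_single (⟨z.toNat, by omega⟩ : Fin n)]
      · simp [muExt, hz]
      · intro b _ hb
        rw [if_neg, zero_mul]
        intro h
        apply hb
        ext
        simp [← h]
      · simp
    · rw [Finset.sum_eq_zero]
      · simp [muExt, hz]
      · intro b _
        rw [if_neg, zero_mul]
        intro h
        apply hz
        omega

open scoped Classical in
/-- For multilinear `f = Σ_σ α_σ X_{σ(1)}⋯X_{σ(m)}` and the graded generic
substitution `xᵢ = Σ_j μ_{i,j} e_{j, j+qᵢ}` with `Σ qᵢ = 0`, the value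
`f(x₁,…,x_m)` is diagonal with `(j,j)` entry
`Σ_{σ kosher at j} α_σ ∏_t μ_{σ(t), j_t}`. -/
theorem multilinear_graded_eval_entries (F : Type) [Field F] (m n : ℕ)
    (hm : 1 ≤ m) (hn : 1 ≤ n) (α : Equiv.Perm (Fin m) → F)
    (f : FreeAlgebra F (Fin m))
    (hf : f = ∑ σ : Equiv.Perm (Fin m),
      α σ • (List.ofFn fun t : Fin m => FreeAlgebra.ι F (σ t)).prod)
    (q : Fin m → ℤ) (hq : ∑ i : Fin m, q i = 0)
    (x : Fin m → Matrix (Fin n) (Fin n) (MvPolynomial (Fin m × Fin n) F))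
    (hx : ∀ (i : Fin m) (j k : Fin n),
      x i j k = if (k : ℤ) = (j : ℤ) + q i then MvPolynomial.X (i, j) else 0) :
    (FreeAlgebra.lift F x f : Matrix (Fin n) (Fin n) (MvPolynomial (Fin m × Fin n) F)).IsDiag ∧
    ∀ j : Fin n,
      (FreeAlgebra.lift F x f : Matrix (Fin n) (Fin n) (MvPolynomial (Fin m × Fin n) F)) j j =
        ∑ σ ∈ Finset.univ.filter (fun σ : Equiv.Perm (Fin m) => Kosher n q σ j),
          MvPolynomial.C (α σ) * ∏ t : Fin m, muExt F m n (σ t) (Sfun n q σ j t) := by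
  have key : ∀ j k : Fin n, (FreeAlgebra.lift F x f) j k =
      ∑ σ : Equiv.Perm (Fin m), MvPolynomial.C (α σ) *
        if k = j then ∏ t : Fin m, muExt F m n (σ t) (Sfun n q σ j t) else 0 := by
    intro j k
    rw [hf, map_sum, Matrix.sum_apply]
    refine Finset.sum_congr rfl fun σ _ => ?_
    have h1 : (FreeAlgebra.lift F x) (List.ofFn fun t : Fin m => FreeAlgebra.ι F (σ t)).prod
        = (List.ofFn fun t => x (σ t)).prod := by
      rw [map_list_prod, List.map_ofFn]
      congr 2
      funext t
      simp
    rw [map_smul, Matrix.smul_apply, h1, ofFn_prod_entry F m n q x hx, MvPolynomial.smul_eq_C_mul,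
      Equiv.sum_comp σ q, hq]
    simp [Sfun, Finset.sum_filter, Fin.ext_iff]
  constructor
  · intro j k hjk
    rw [key]
    simp [hjk.symm]
  · intro j
    rw [key, Finset.sum_filter]
    refine Finset.sum_congr rfl fun σ _ => ?_
    rw [if_pos rfl]
    split_ifs with h
    · rfl
    · simp only [Kosher, not_forall] at h
      obtain ⟨t, ht⟩ := h
      rw [Finset.prod_eq_zero (Finset.mem_univ t), mul_zero]
      simp only [muExt, dif_neg ht]
end

section
/- Let F be an algebraically closed field, n ≥ 1, and let f ∈ F⟨X_1,…,X_m⟩ be a polynomial that is not a polynomial identity of M_n(F). Let Y_1,…,Y_m be generic n×n matrices over F. Then det f(Y_1,…,Y_m) is a nonzero element of the polynomial ring R; equivalently, f(Y_1,…,Y_m) is an invertible matrix over the fraction field K = Frac(R). -/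
open Polynomial in
/-- A matrix of polynomials supported on the degrees `c k = j - i`, and compatible with
an injective translation action, is zero or has nonzero determinant. -/
theorem det_ne_zero_of_graded {ι R : Type} [Fintype ι] [DecidableEq ι] [AddCommGroup ι]
    [CommRing R] [IsDomain R] (c : ℕ →+ ι) (s : ι → R →+* R)
    (hs : ∀ g, Function.Injective (s g)) (M : Matrix ι ι R[X])
    (h1 : ∀ i j k, (M i j).coeff k ≠ 0 → c k = j - i)
    (h2 : ∀ g i j, (M i j).map (s g) = M (i + g) (j + g)) (hM : M ≠ 0) : M.det ≠ 0 := by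
  classical
  obtain ⟨p, -, hp⟩ := Finset.exists_max_image (Finset.univ : Finset (ι × ι))
    (fun p => (M p.1 p.2).degree) ⟨(0, 0), Finset.mem_univ _⟩
  have hp0 : M p.1 p.2 ≠ 0 := by
    intro h0
    apply hM
    ext1 i j
    have := hp (i, j) (Finset.mem_univ _)
    simpa [h0] using this
  set N := (M p.1 p.2).natDegree with hN
  have hdeg : ∀ i j, (M i j).natDegree ≤ N := fun i j =>
    natDegree_le_natDegree (hp (i, j) (Finset.mem_univ _))
  have hlead : (M p.1 p.2).coeff N ≠ 0 := by
    simpa [hN] using hp0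
  have hcN := h1 _ _ _ hlead
  have hd : ∀ i, (M i (i + c N)).coeff N ≠ 0 := by
    intro i
    have h := h2 (i - p.1) p.1 p.2
    have e1 : p.1 + (i - p.1) = i := by abel
    have e2 : p.2 + (i - p.1) = i + c N := by rw [hcN]; abel
    rw [e1, e2] at h
    rw [← h, coeff_map]
    exact fun h0 => hlead (hs _ (by simpa using h0))
  have hL : (Matrix.of fun i j => (M i j).coeff N) =
      (Matrix.diagonal fun i => (M i (i + c N)).coeff N).submatrix id
        (Equiv.addRight (-(c N))) := by
    ext i j
    by_cases h : j = i + c N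
    · subst h
      simp
    · have : (M i j).coeff N = 0 := by
        by_contra h0
        exact h (by rw [h1 _ _ _ h0]; abel)
      have h' : i ≠ j + -(c N) := fun h0 => h (by rw [h0]; abel)
      simp [this, Matrix.diagonal_apply_ne _ h']
  have hdetL : (Matrix.of fun i j => (M i j).coeff N).det ≠ 0 := by
    rw [hL, Matrix.det_permute', Matrix.det_diagonal]
    apply mul_ne_zero
    · rcases Int.units_eq_one_or (Equiv.Perm.sign (Equiv.addRight (-(c N)))) with h | h <;>
        simp [h]
    · exact Finset.prod_ne_zero_iff.mpr fun i _ => hd i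
  intro h0
  apply hdetL
  have h3 : M.det.coeff (Fintype.card ι * N) = 0 := by simp [h0]
  rw [← h3, Matrix.det_apply', Matrix.det_apply', finsetSum_coeff]
  refine Finset.sum_congr rfl fun π _ => ?_
  rw [← Polynomial.C_eq_intCast, Polynomial.coeff_C_mul]
  congr 1
  have := Polynomial.coeff_prod_of_natDegree_le (s := Finset.univ) (fun i => M (π i) i) N
    (fun i _ => hdeg _ _)
  rw [Finset.card_univ] at this
  rw [this]
  rfl

open Polynomial in
theorem generic_det_aux (F : Type) [Field F] (m : ℕ) {ι : Type} [Fintype ι] [DecidableEq ι]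
    [AddCommGroup ι] (c : ℕ →+ ι) (hc : Function.Surjective c) (f : FreeAlgebra F (Fin m))
    (a : Fin m → Matrix ι ι F) (ha : FreeAlgebra.lift F a f ≠ 0) :
    (FreeAlgebra.lift F (fun ℓ : Fin m =>
        (Matrix.of fun i j : ι => MvPolynomial.X (ℓ, i, j) :
          Matrix ι ι (MvPolynomial (Fin m × ι × ι) F))) f).det ≠ 0 := by
  classical
  choose d hd using hc
  let Y : Fin m → Matrix ι ι (MvPolynomial (Fin m × ι × ι) F) := fun ℓ => Matrix.of fun i j : ι => MvPolynomial.X (ℓ, i, j)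
  let Z : Fin m → Matrix ι ι (MvPolynomial (Fin m × ι × ι) F)[X] := fun ℓ => Matrix.of fun i j : ι =>
    C (MvPolynomial.X (ℓ, i, j) : MvPolynomial (Fin m × ι × ι) F) * X ^ (d (j - i))
  let φ : MvPolynomial (Fin m × ι × ι) F →ₐ[F] (MvPolynomial (Fin m × ι × ι) F)[X] := MvPolynomial.aeval fun p : Fin m × ι × ι =>
    C (MvPolynomial.X p : MvPolynomial (Fin m × ι × ι) F) * X ^ (d (p.2.2 - p.2.1))
  let s : ι → MvPolynomial (Fin m × ι × ι) F →ₐ[F] MvPolynomial (Fin m × ι × ι) F := fun g =>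
    MvPolynomial.rename fun p : Fin m × ι × ι => (p.1, p.2.1 + g, p.2.2 + g)
  let e : MvPolynomial (Fin m × ι × ι) F →ₐ[F] F := MvPolynomial.aeval fun p : Fin m × ι × ι => a p.1 p.2.1 p.2.2
  let ψ : (MvPolynomial (Fin m × ι × ι) F)[X] →ₐ[F] F := e.comp ((Polynomial.aeval (R := (MvPolynomial (Fin m × ι × ι) F)) (1 : MvPolynomial (Fin m × ι × ι) F)).restrictScalars F)
  have hφ : φ.mapMatrix (FreeAlgebra.lift F Y f) = FreeAlgebra.lift F Z f := by
    have : φ.mapMatrix.comp (FreeAlgebra.lift F Y) = FreeAlgebra.lift F Z := by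
      ext ℓ i j
      simp [Y, Z, φ]
    exact DFunLike.congr_fun this f
  have hψ : ψ.mapMatrix (FreeAlgebra.lift F Z f) = FreeAlgebra.lift F a f := by
    have : ψ.mapMatrix.comp (FreeAlgebra.lift F Z) = FreeAlgebra.lift F a := by
      ext ℓ i j
      simp [Z, ψ, e]
    exact DFunLike.congr_fun this f
  have hne : FreeAlgebra.lift F Z f ≠ 0 := by
    intro h
    rw [h, map_zero] at hψ
    exact ha hψ.symm
  have hs : ∀ g, Function.Injective (s g : MvPolynomial (Fin m × ι × ι) F →+* MvPolynomial (Fin m × ι × ι) F) := by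
    intro g
    apply MvPolynomial.rename_injective
    rintro ⟨l, i, j⟩ ⟨l', i', j'⟩ h
    simpa using h
  have h2 : ∀ g i j, ((FreeAlgebra.lift F Z f) i j).map (s g : MvPolynomial (Fin m × ι × ι) F →+* MvPolynomial (Fin m × ι × ι) F) =
      (FreeAlgebra.lift F Z f) (i + g) (j + g) := by
    intro g
    have : (Polynomial.mapAlgHom (s g)).mapMatrix.comp (FreeAlgebra.lift F Z) =
        (Matrix.reindexAlgEquiv F (MvPolynomial (Fin m × ι × ι) F)[X] (Equiv.addRight (-g))).toAlgHom.comp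
          (FreeAlgebra.lift F Z) := by
      ext ℓ i j : 4
      simp [Z, s]
    intro i j
    have h := congrFun (congrFun (DFunLike.congr_fun this f) i) j
    simpa using h
  have h1 : ∀ i j k, ((FreeAlgebra.lift F Z f) i j).coeff k ≠ 0 → c k = j - i := by
    clear h2 hne hψ hφ ha
    induction f using FreeAlgebra.induction with
    | grade0 r =>
      intro i j k h
      rw [AlgHom.commutes, Matrix.algebraMap_matrix_apply] at h
      split_ifs at h with hij
      · subst hij
        rw [Polynomial.algebraMap_apply, Polynomial.coeff_C] at h
        split_ifs at h with hk
        · simp [hk]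
        · exact absurd rfl h
      · simp at h
    | grade1 x =>
      intro i j k h
      simp only [FreeAlgebra.lift_ι_apply, Z, Matrix.of_apply, Polynomial.coeff_C_mul,
        Polynomial.coeff_X_pow] at h
      split_ifs at h with hk
      · rw [hk, hd]
      · simp at h
    | mul x y hx hy =>
      intro i j k h
      rw [map_mul, Matrix.mul_apply, finsetSum_coeff] at h
      obtain ⟨l, -, h⟩ := Finset.exists_ne_zero_of_sum_ne_zero h
      rw [Polynomial.coeff_mul] at h
      obtain ⟨q, hq, h⟩ := Finset.exists_ne_zero_of_sum_ne_zero h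
      rw [← Finset.HasAntidiagonal.mem_antidiagonal.mp hq, map_add, hx _ _ _ (left_ne_zero_of_mul h),
        hy _ _ _ (right_ne_zero_of_mul h)]
      abel
    | add x y hx hy =>
      intro i j k h
      rw [map_add, Matrix.add_apply, Polynomial.coeff_add] at h
      by_cases h0 : ((FreeAlgebra.lift F Z x) i j).coeff k = 0
      · rw [h0, zero_add] at h
        exact hy _ _ _ h
      · exact hx _ _ _ h0
  have hdet := det_ne_zero_of_graded c (fun g => (s g : MvPolynomial (Fin m × ι × ι) F →+* MvPolynomial (Fin m × ι × ι) F)) hs _ h1 h2 hne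
  intro h
  apply hdet
  rw [← hφ, ← AlgHom.map_det]
  change φ (FreeAlgebra.lift F Y f).det = 0
  rw [show (FreeAlgebra.lift F Y f).det = 0 from h, map_zero]


/-- If `f` is not a polynomial identity of `Mₙ(F)` (`F` algebraically closed),
then the evaluation of `f` on the generic `n × n` matrices
`Y_ℓ = (x^{(ℓ)}_{i,j})` over `R = F[x^{(ℓ)}_{i,j}]` has nonzero determinant;
equivalently, it is invertible as a matrix over `K = Frac R`. -/
theorem generic_eval_det_ne_zero (F : Type) [Field F] [IsAlgClosed F] (m n : ℕ)
    (hn : 1 ≤ n) (f : FreeAlgebra F (Fin m))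
    (hf : ¬ ∀ a : Fin m → Matrix (Fin n) (Fin n) F, FreeAlgebra.lift F a f = 0) :
    ((FreeAlgebra.lift F (fun ℓ : Fin m =>
        (Matrix.of fun i j : Fin n => MvPolynomial.X (ℓ, i, j) :
          Matrix (Fin n) (Fin n) (MvPolynomial (Fin m × Fin n × Fin n) F))) f :
        Matrix (Fin n) (Fin n) (MvPolynomial (Fin m × Fin n × Fin n) F)).det ≠ 0) ∧
    IsUnit ((FreeAlgebra.lift F (fun ℓ : Fin m =>
        (Matrix.of fun i j : Fin n => MvPolynomial.X (ℓ, i, j) :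
          Matrix (Fin n) (Fin n) (MvPolynomial (Fin m × Fin n × Fin n) F))) f :
        Matrix (Fin n) (Fin n) (MvPolynomial (Fin m × Fin n × Fin n) F)).map
        (algebraMap (MvPolynomial (Fin m × Fin n × Fin n) F)
          (FractionRing (MvPolynomial (Fin m × Fin n × Fin n) F)))) := by
  push Not at hf
  obtain ⟨a, ha⟩ := hf
  obtain ⟨k, rfl⟩ : ∃ k, n = k + 1 := ⟨n - 1, by omega⟩
  have hc : Function.Surjective (multiplesHom (Fin (k + 1)) 1) := by
    intro i
    refine ⟨i.val, ?_⟩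
    rw [multiplesHom_apply]
    have h := ZMod.natCast_zmod_val (n := k + 1) i
    rw [← nsmul_one] at h
    exact h
  have key := generic_det_aux F m _ hc f a ha
  refine ⟨key, ?_⟩
  rw [Matrix.isUnit_iff_isUnit_det, ← RingHom.mapMatrix_apply, ← RingHom.map_det, isUnit_iff_ne_zero]
  exact fun h => key ((IsFractionRing.injective _ _) (by rw [h, map_zero]))
end
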